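/- Let m be a positive half-integer and s a positive half-odd integer (2s an odd positive integer). For τ in the upper half-plane and z1, z2 ∈ ℂ such that neither 2z1 nor 2z2 lies in ℤ + ℤ·(2τ), the following identity holds: θ_{0,2m+1}(τ, (−1/2 + 2m(z1−z2))/(2m+1)) · Φ^{[m,s]}(2τ, 2z1, 2z2, 0) = −i η(2τ)³ { θ_{0,2m+1}(τ, (1/2+z1−z2)/(2m+1) + z1+z2) / ϑ_{11}(2τ, 2z1) + θ_{0,2m+1}(τ, (1/2+z1−z2)/(2m+1) − z1−z2) / ϑ_{11}(2τ, 2z2) } + Σ_{j=1}^∞ Σ_{r=1}^{j} Σ_{k odd, 1≤k≤2m−1} (−1)^j q^{(2m+1)j² − (4m(j−r)+k)²/(8m)} { e^{πi(4mr−k)(z1−z2)} + e^{−πi(4mr−k)(z1−z2)} } [θ_{k,2m} − θ_{−k,2m}](τ, z1+z2) − Σ_{j=1}^∞ Σ_{r=0}^{j−1} Σ_{k odd, 1≤k≤2m−1} (−1)^j q^{(2m+1)j² − (4m(j−r)−k)²/(8m)} { e^{πi(4mr+k)(z1−z2)} + e^{−πi(4mr+k)(z1−z2)} } [θ_{k,2m}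 − θ_{−k,2m}](τ, z1+z2) − θ_{0,2m+1}(τ, (−1/2 + 2m(z1−z2))/(2m+1)) · Σ_{k=0}^{s−3/2} e^{πi(1+2k)(z1−z2)} q^{−(1+2k)²/(8m)} [θ_{1/2+k, m} − θ_{−(1/2+k), m}](2τ, 2(z1+z2)), where in the last sum k runs over the integers 0, 1, …, s−3/2 (empty if s = 1/2). -/

import Mathlib

open Complex

noncomputable section

namespace Wakimoto

/-- `qpow τ x = e^{2πiτx}`, i.e. `q^x` where `q = e^{2πiτ}`. -/
def qpow (τ x : ℂ) : ℂ := Complex.exp (2 * Real.pi * Complex.I * τ * x)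

/-- `e2 z = e^{2πiz}`. -/
def e2 (z : ℂ) : ℂ := Complex.exp (2 * Real.pi * Complex.I * z)

/-- The mock theta function `Φ^{[m,s]}_1`. -/
def Phi1 (m s : ℂ) (τ z1 z2 t : ℂ) : ℂ :=
  Complex.exp (-(2 * Real.pi * Complex.I) * m * t) *
    ∑' j : ℤ,
      Complex.exp (2 * Real.pi * Complex.I * (m * (j : ℂ) * (z1 + z2) + s * z1)) *
          qpow τ (m * (j : ℂ) ^ 2 + s * (j : ℂ)) /
        (1 - e2 z1 * qpow τ (j : ℂ))

/-- The mock theta function `Φ^{[m,s]}_2`. -/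
def Phi2 (m s : ℂ) (τ z1 z2 t : ℂ) : ℂ :=
  Complex.exp (-(2 * Real.pi * Complex.I) * m * t) *
    ∑' j : ℤ,
      Complex.exp (-(2 * Real.pi * Complex.I) * (m * (j : ℂ) * (z1 + z2) + s * z2)) *
          qpow τ (m * (j : ℂ) ^ 2 + s * (j : ℂ)) /
        (1 - e2 (-z2) * qpow τ (j : ℂ))

/-- `Φ^{[m,s]} = Φ^{[m,s]}_1 - Φ^{[m,s]}_2`. -/
def Phi (m s : ℂ) (τ z1 z2 t : ℂ) : ℂ :=
  Phi1 m s τ z1 z2 t - Phi2 m s τ z1 z2 t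

/-- Jacobi's theta function `θ_{k,m}`. -/
def jTheta (k m : ℂ) (τ z : ℂ) : ℂ :=
  ∑' j : ℤ,
    Complex.exp (2 * Real.pi * Complex.I * (m * ((j : ℂ) + k / (2 * m)) * z)) *
      qpow τ (m * ((j : ℂ) + k / (2 * m)) ^ 2)

/-- The signed theta function `θ^{(-)}_{k,m}`. -/
def jThetaM (k m : ℂ) (τ z : ℂ) : ℂ :=
  ∑' j : ℤ,
    (-1 : ℂ) ^ j *
      Complex.exp (2 * Real.pi * Complex.I * (m * ((j : ℂ) + k / (2 * m)) * z)) *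
      qpow τ (m * ((j : ℂ) + k / (2 * m)) ^ 2)

/-- The Dedekind eta function. -/
def eta (τ : ℂ) : ℂ := qpow τ (1 / 24) * ∏' n : ℕ, (1 - qpow τ ((n : ℂ) + 1))

/-- The Mumford theta functions `ϑ_{ab}`. -/
def mumford (a b : ℕ) (τ z : ℂ) : ℂ :=
  ∑' n : ℤ,
    Complex.exp (Real.pi * Complex.I * τ * ((n : ℂ) + (a : ℂ) / 2) ^ 2 +
      2 * Real.pi * Complex.I * ((n : ℂ) + (a : ℂ) / 2) * (z + (b : ℂ) / 2))

/-- `z` lies in the lattice `ℤ + ℤτ`. -/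
def InLattice (τ z : ℂ) : Prop := ∃ a b : ℤ, z = (a : ℂ) + (b : ℂ) * τ

section Helpers

open Filter Topology

/-! ### Part 1: finite q-identities -/

/-- Reciprocal finite products `1/(Q;Q)_n`, `Q = q^2`, extended by zero to negative `n`. -/
def ipoch (q : ℂ) (n : ℤ) : ℂ :=
  if n < 0 then 0 else (∏ k ∈ Finset.range n.toNat, (1 - q ^ (2 * (k + 1))))⁻¹

lemma one_sub_pow_ne {q : ℂ} (hq : ‖q‖ < 1) {k : ℕ} (hk : k ≠ 0) : 1 - q ^ k ≠ 0 := by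
  intro h
  have h1 : q ^ k = 1 := (sub_eq_zero.mp h).symm
  have h2 : ‖q‖ ^ k = 1 := by rw [← norm_pow, h1, norm_one]
  have := pow_lt_one₀ (norm_nonneg q) hq hk
  linarith

lemma ipoch_neg (q : ℂ) {n : ℤ} (hn : n < 0) : ipoch q n = 0 := by
  simp [ipoch, hn]

lemma ipoch_nat (q : ℂ) (n : ℕ) :
    ipoch q n = (∏ k ∈ Finset.range n, (1 - q ^ (2 * (k + 1))))⁻¹ := by
  simp [ipoch]

lemma ipoch_sub_one {q : ℂ} (hq : ‖q‖ < 1) (n : ℤ) :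
    ipoch q (n - 1) = (1 - q ^ (2 * n)) * ipoch q n := by
  rcases lt_trichotomy n 0 with h | h | h
  · rw [ipoch_neg q h, ipoch_neg q (by omega)]; simp
  · subst h; rw [ipoch_neg q (by omega)]; simp
  · obtain ⟨k, rfl⟩ : ∃ k : ℕ, n = k + 1 := ⟨(n - 1).toNat, by omega⟩
    have h1 : ((k : ℤ) + 1 - 1) = (k : ℤ) := by ring
    have h2 : ((k : ℤ) + 1) = ((k + 1 : ℕ) : ℤ) := by push_cast; ring
    rw [h1, h2, ipoch_nat, ipoch_nat, Finset.prod_range_succ, mul_inv]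
    have h3 : (1 - q ^ (2 * (k + 1))) ≠ 0 := one_sub_pow_ne hq (by omega)
    have h4 : q ^ (2 * ((k + 1 : ℕ) : ℤ)) = q ^ (2 * (k + 1)) := by
      rw [show (2 * ((k + 1 : ℕ) : ℤ)) = ((2 * (k + 1) : ℕ) : ℤ) by push_cast; ring, zpow_natCast]
    rw [h4]
    field_simp

lemma sum_pascal (C : ℤ → ℂ) (f : ℤ → ℂ) (lam : ℂ) (L : ℕ) (h0 : C (-1) = 0)
    (h1 : C ((L : ℤ) + 1) = 0) :
    ∑ i ∈ Finset.range (L + 2), (C i - lam * C ((i : ℤ) - 1)) * f i =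
      ∑ i ∈ Finset.range (L + 1), C i * f i -
        lam * ∑ i ∈ Finset.range (L + 1), C i * f ((i : ℤ) + 1) := by
  simp_rw [sub_mul]
  rw [Finset.sum_sub_distrib]
  congr 1
  · rw [Finset.sum_range_succ]
    push_cast
    rw [h1]; simp
  · rw [Finset.sum_range_succ', Finset.mul_sum]
    simp [h0, mul_assoc]

/-- q-binomial theorem. -/
lemma q_binomial {q : ℂ} (hq0 : q ≠ 0) (hq : ‖q‖ < 1) (y : ℂ) (L : ℕ) :
    (∏ i ∈ Finset.range L, (1 - y * q ^ (2 * (i : ℤ)))) =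
      ∑ i ∈ Finset.range (L + 1), ((-1 : ℂ) ^ (i : ℤ) * q ^ ((i : ℤ) * (i - 1)) *
        (ipoch q L)⁻¹ * ipoch q i * ipoch q ((L : ℤ) - i)) * y ^ (i : ℤ) := by
  induction L with
  | zero => simp [ipoch]
  | succ L ih =>
    rw [Finset.prod_range_succ, ih]
    have hP : ipoch q ((L : ℤ)) = (1 - q ^ (2 * ((L : ℤ) + 1))) * ipoch q ((L : ℤ) + 1) := by
      have := ipoch_sub_one hq ((L : ℤ) + 1)
      simpa using this
    have hne : (1 - q ^ (2 * ((L : ℤ) + 1))) ≠ 0 := by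
      have := one_sub_pow_ne hq (k := 2 * (L + 1)) (by omega)
      rw [← zpow_natCast] at this; push_cast at this; exact this
    have hz : ∀ n : ℕ, ipoch q n ≠ 0 := by
      intro n
      rw [ipoch_nat]
      exact inv_ne_zero (Finset.prod_ne_zero_iff.mpr fun k _ => one_sub_pow_ne hq (by omega))
    have e1 := hz L
    have e2 := hz (L + 1)
    push_cast at e1 e2
    rcases eq_or_ne y 0 with hy | hy
    · subst hy
      rw [Finset.sum_range_succ', Finset.sum_range_succ']
      have : ∀ k : ℕ, (0 : ℂ) ^ ((k : ℤ) + 1) = 0 := fun k => zero_zpow _ (by omega)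
      simp [this]
      field_simp
    set C : ℤ → ℂ := fun i => (-1 : ℂ) ^ i * q ^ (i * (i - 1)) *
        (ipoch q L)⁻¹ * ipoch q i * ipoch q ((L : ℤ) - i) with hC
    have key := sum_pascal C (fun i => y ^ i) (q ^ (2 * (L : ℤ))) L
      (by simp [hC, ipoch_neg]) (by simp only [hC]; rw [ipoch_neg q (n := (L : ℤ) - (L + 1)) (by omega)]; simp)
    have l1 : ∑ i ∈ Finset.range (L + 1), C i * y ^ ((i : ℤ) + 1) =
        y * ∑ i ∈ Finset.range (L + 1), C i * y ^ (i : ℤ) := by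
      rw [Finset.mul_sum]
      refine Finset.sum_congr rfl fun i _ => ?_
      rw [zpow_add_one₀ hy]; ring
    rw [l1] at key
    have : (∑ i ∈ Finset.range (L + 1), C i * y ^ (i : ℤ)) * (1 - y * q ^ (2 * (L : ℤ))) =
       ∑ i ∈ Finset.range (L + 2), (C i - q ^ (2 * (L : ℤ)) * C ((i : ℤ) - 1)) * y ^ (i : ℤ) := by
      rw [key]; ring
    rw [this]
    refine Finset.sum_congr rfl fun i _ => ?_
    congr 1
    simp only [hC]
    have a1 := ipoch_sub_one hq (i : ℤ)
    have a2 := ipoch_sub_one hq ((L : ℤ) + 1 - i)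
    rw [show (L : ℤ) + 1 - i - 1 = (L : ℤ) - i by ring] at a2
    rw [show (L : ℤ) - ((i : ℤ) - 1) = (L : ℤ) + 1 - i by ring, a1, a2, hP]
    push_cast
    rw [show (-1 : ℂ) ^ ((i : ℤ) - 1) = - (-1) ^ (i : ℤ) by
      rw [zpow_sub_one₀ (by norm_num)]; norm_num]
    rw [show q ^ (2 * ((L : ℤ) + 1 - i)) = q ^ (2 * ((L : ℤ) + 1)) / q ^ (2 * (i : ℤ)) by
      rw [← zpow_sub₀ hq0]; congr 1; ring]
    rw [show q ^ (((i : ℤ) - 1) * ((i : ℤ) - 1 - 1)) =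
      q ^ ((i : ℤ) * (i - 1)) / q ^ (2 * (i : ℤ)) * q ^ (2 : ℤ) by
      rw [← zpow_sub₀ hq0, ← zpow_add₀ hq0]; congr 1; ring]
    rw [show q ^ (2 * ((L : ℤ) + 1)) = q ^ (2 * (L : ℤ)) * q ^ (2 : ℤ) by
      rw [← zpow_add₀ hq0]; congr 1] at hne ⊢
    have hqi : q ^ (2 * (i : ℤ)) ≠ 0 := zpow_ne_zero _ hq0
    rw [mul_inv]
    generalize q ^ (2 : ℤ) = t2 at hne ⊢
    generalize q ^ (2 * (L : ℤ)) = tl at hne ⊢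
    generalize q ^ (2 * (i : ℤ)) = ti at hqi ⊢
    generalize ipoch q ((L : ℤ) + 1) = u at e2 ⊢
    field_simp
    ring

/-- Finite partial fraction expansion. -/
lemma partial_frac {q : ℂ} (hq0 : q ≠ 0) (hq : ‖q‖ < 1) (L : ℕ) : ∀ (p : ℕ) (_ : p ≤ L) (y : ℂ)
    (_ : ∀ i : ℤ, 1 - y * q ^ (2 * i) ≠ 0),
    y ^ (p : ℤ) * (∏ i ∈ Finset.range (L + 1), (1 - y * q ^ (2 * (i : ℤ))))⁻¹ =
      ∑ i ∈ Finset.range (L + 1), ((-1 : ℂ) ^ (i : ℤ) * q ^ ((i : ℤ) * (i + 1) - 2 * i * p) *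
        ipoch q i * ipoch q ((L : ℤ) - i)) * (1 - y * q ^ (2 * (i : ℤ)))⁻¹ := by
  induction L with
  | zero =>
    intro p hp y hy
    obtain rfl : p = 0 := by omega
    simp [ipoch]
  | succ L ih =>
    intro p hp y hy
    have hne : (1 - q ^ (2 * ((L : ℤ) + 1))) ≠ 0 := by
      have := one_sub_pow_ne hq (k := 2 * (L + 1)) (by omega)
      rw [← zpow_natCast] at this; push_cast at this; exact this
    have hyq : ∀ i : ℤ, 1 - (y * q ^ (2 : ℤ)) * q ^ (2 * i) ≠ 0 := by
      intro i
      have := hy (i + 1)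
      rw [mul_assoc, ← zpow_add₀ hq0, show (2 : ℤ) + 2 * i = 2 * (i + 1) by ring]; exact this
    -- shifted products
    have hsh : ∀ i : ℤ, (y * q ^ (2 : ℤ)) * q ^ (2 * i) = y * q ^ (2 * (i + 1)) := by
      intro i
      rw [mul_assoc, ← zpow_add₀ hq0, show (2 : ℤ) + 2 * i = 2 * (i + 1) by ring]
    set W : ℂ := ∏ i ∈ Finset.range L, (1 - y * q ^ (2 * ((i : ℤ) + 1))) with hW
    have hWne : W ≠ 0 := Finset.prod_ne_zero_iff.mpr fun i _ => hy _
    have hf0 : 1 - y ≠ 0 := by simpa using hy 0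
    have hfL : 1 - y * q ^ (2 * ((L : ℤ) + 1)) ≠ 0 := hy _
    have p1 : (∏ i ∈ Finset.range (L + 1), (1 - y * q ^ (2 * (i : ℤ)))) = W * (1 - y) := by
      rw [Finset.prod_range_succ']; simp [hW]
    have p2 : (∏ i ∈ Finset.range (L + 1), (1 - (y * q ^ (2 : ℤ)) * q ^ (2 * (i : ℤ)))) =
        W * (1 - y * q ^ (2 * ((L : ℤ) + 1))) := by
      simp_rw [hsh]
      rw [Finset.prod_range_succ]
    have p3 : (∏ i ∈ Finset.range (L + 1 + 1), (1 - y * q ^ (2 * (i : ℤ)))) =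
        W * (1 - y * q ^ (2 * ((L : ℤ) + 1))) * (1 - y) := by
      rw [Finset.prod_range_succ', Finset.prod_range_succ]; simp [hW]
    rw [p3]
    have qadd : ∀ a b : ℤ, q ^ (a + b) = q ^ a * q ^ b := fun a b => zpow_add₀ hq0 a b
    have main : ∀ (p' : ℕ) (lam : ℂ), p' ≤ L →
        (y ^ (p' : ℤ) * (W * (1 - y))⁻¹ - lam * ((y * q ^ (2 : ℤ)) ^ (p' : ℤ) *
          (W * (1 - y * q ^ (2 * ((L : ℤ) + 1))))⁻¹)) =
        (1 - q ^ (2 * ((L : ℤ) + 1))) * (y ^ (p : ℤ) *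
          (W * (1 - y * q ^ (2 * ((L : ℤ) + 1))) * (1 - y))⁻¹) →
        (∀ i : ℤ, (-1 : ℂ) ^ i * q ^ (i * (i + 1) - 2 * i * p') *
          ipoch q i * ipoch q ((L : ℤ) - i) - lam * ((-1 : ℂ) ^ (i - 1) *
            q ^ ((i - 1) * (i - 1 + 1) - 2 * (i - 1) * p') *
          ipoch q (i - 1) * ipoch q ((L : ℤ) - (i - 1))) =
          (1 - q ^ (2 * ((L : ℤ) + 1))) * ((-1 : ℂ) ^ i * q ^ (i * (i + 1) - 2 * i * p) *
          ipoch q i * ipoch q ((L : ℤ) + 1 - i))) →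
        y ^ (p : ℤ) * (W * (1 - y * q ^ (2 * ((L : ℤ) + 1))) * (1 - y))⁻¹ =
        ∑ i ∈ Finset.range (L + 1 + 1), ((-1 : ℂ) ^ (i : ℤ) *
          q ^ ((i : ℤ) * (i + 1) - 2 * i * p) *
        ipoch q i * ipoch q (((L + 1 : ℕ) : ℤ) - i)) * (1 - y * q ^ (2 * (i : ℤ)))⁻¹ := by
      intro p' lam hp' h1 h2
      apply mul_left_cancel₀ hne
      rw [← h1, ← p1, ← p2, ih p' hp' y hy, ih p' hp' _ hyq]
      set C : ℤ → ℂ := fun i => (-1 : ℂ) ^ i * q ^ (i * (i + 1) - 2 * i * p') *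
          ipoch q i * ipoch q ((L : ℤ) - i) with hC
      have key := sum_pascal C (fun i => (1 - y * q ^ (2 * i))⁻¹) lam L
        (by simp [hC, ipoch_neg])
        (by simp only [hC]; rw [ipoch_neg q (n := (L : ℤ) - (L + 1)) (by omega)]; simp)
      simp_rw [hsh]
      rw [← key, Finset.mul_sum]
      refine Finset.sum_congr rfl fun i _ => ?_
      rw [← mul_assoc (1 - q ^ (2 * ((L : ℤ) + 1)))]
      congr 1
      push_cast
      exact h2 i
    have hip : ∀ i : ℤ, ipoch q (i - 1) = (1 - q ^ (2 * i)) * ipoch q i := ipoch_sub_one hq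
    have hip2 : ∀ i : ℤ, ipoch q ((L : ℤ) - i) =
        (1 - q ^ (2 * ((L : ℤ) + 1)) / q ^ (2 * i)) * ipoch q ((L : ℤ) + 1 - i) := by
      intro i
      have := ipoch_sub_one hq ((L : ℤ) + 1 - i)
      rw [show (L : ℤ) + 1 - i - 1 = (L : ℤ) - i by ring] at this
      rw [this, ← zpow_sub₀ hq0]
      congr 3; ring
    have hsgn : ∀ i : ℤ, (-1 : ℂ) ^ (i - 1) = - (-1) ^ i := by
      intro i
      rw [zpow_sub_one₀ (by norm_num)]; norm_num
    rcases Nat.eq_zero_or_pos p with hp0 | hp0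
    · subst hp0
      apply main 0 (q ^ (2 * ((L : ℤ) + 1))) (by omega)
      · simp only [Nat.cast_zero, zpow_zero]
        field_simp
        ring
      · intro i
        rw [hip, hip2, hsgn, show (L : ℤ) - (i - 1) = (L : ℤ) + 1 - i by ring]
        have e : q ^ ((i - 1) * (i - 1 + 1) - 2 * (i - 1) * ((0 : ℕ) : ℤ)) =
            q ^ (i * (i + 1) - 2 * i * ((0 : ℕ) : ℤ)) / q ^ (2 * i) := by
          rw [← zpow_sub₀ hq0]; congr 1; push_cast; ring
        rw [e]
        have hqi : q ^ (2 * i) ≠ 0 := zpow_ne_zero _ hq0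
        field_simp
        ring
    · obtain ⟨p', rfl⟩ : ∃ p', p = p' + 1 := ⟨p - 1, by omega⟩
      apply main p' (q ^ (-(2 * (p' : ℤ)))) (by omega)
      · have : q ^ (-(2 * (p' : ℤ))) * (y * q ^ (2 : ℤ)) ^ (p' : ℤ) = y ^ (p' : ℤ) := by
          rw [mul_zpow, ← zpow_mul, mul_left_comm, ← zpow_add₀ hq0]
          simp
        rw [← mul_assoc, this]
        push_cast
        rw [show y ^ ((p' : ℤ) + 1) = y ^ (p' : ℤ) * y by
          rw [show ((p' : ℤ) + 1) = ((p' + 1 : ℕ) : ℤ) by push_cast; ring, zpow_natCast,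
            zpow_natCast, pow_succ]]
        field_simp
        ring
      · intro i
        rw [hip, hip2, hsgn, show (L : ℤ) - (i - 1) = (L : ℤ) + 1 - i by ring]
        have e : q ^ (-(2 * (p' : ℤ))) * q ^ ((i - 1) * (i - 1 + 1) - 2 * (i - 1) * (p' : ℤ)) =
            q ^ (i * (i + 1) - 2 * i * (p' : ℤ)) / q ^ (2 * i) := by
          rw [← zpow_sub₀ hq0, ← zpow_add₀ hq0]; congr 1; ring
        have e2 : q ^ (i * (i + 1) - 2 * i * ((p' + 1 : ℕ) : ℤ)) =
            q ^ (i * (i + 1) - 2 * i * (p' : ℤ)) / q ^ (2 * i) := by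
          rw [← zpow_sub₀ hq0]; congr 1; push_cast; ring
        rw [e2]
        have hqi : q ^ (2 * i) ≠ 0 := zpow_ne_zero _ hq0
        rw [show ∀ a b c d f : ℂ, a * (b * c * d * f) = (a * c) * b * d * f by intros; ring, e]
        field_simp
        ring

/-! ### Part 2: summability and the expansion of `1/ϑ₁₁` -/

lemma e2_add (a b : ℂ) : e2 (a + b) = e2 a * e2 b := by
  unfold e2; rw [← Complex.exp_add]; congr 1; ring

lemma e2_ne (a : ℂ) : e2 a ≠ 0 := Complex.exp_ne_zero _

lemma e2_neg (a : ℂ) : e2 (-a) = (e2 a)⁻¹ := by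
  unfold e2; rw [← Complex.exp_neg]; congr 1; ring

lemma e2_sub (a b : ℂ) : e2 (a - b) = e2 a / e2 b := by
  rw [sub_eq_add_neg, e2_add, e2_neg]; rfl

lemma e2_zpow (a : ℂ) (n : ℤ) : e2 a ^ n = e2 (n * a) := by
  unfold e2; rw [← Complex.exp_int_mul]; congr 1; ring

lemma e2_pow (a : ℂ) (n : ℕ) : e2 a ^ n = e2 (n * a) := by
  unfold e2; rw [← Complex.exp_nat_mul]; congr 1; ring

lemma qpow_eq (τ x : ℂ) : qpow τ x = e2 (τ * x) := by
  unfold qpow e2; congr 1; ring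

lemma e2_half (n : ℤ) : e2 ((n : ℂ) / 2) = (-1) ^ n := by
  have : e2 (1 / 2) = -1 := by
    unfold e2
    rw [show (2 * Real.pi * Complex.I * (1 / 2) : ℂ) = Real.pi * Complex.I by ring,
      Complex.exp_pi_mul_I]
  rw [← this, e2_zpow]; congr 1; ring

lemma e2_int (n : ℤ) : e2 (n : ℂ) = 1 := by
  have := e2_half (2 * n)
  rw [zpow_mul] at this
  norm_num at this
  exact this

lemma norm_e2 (w : ℂ) : ‖e2 w‖ = Real.exp (-(2 * Real.pi * w.im)) := by
  unfold e2
  rw [Complex.norm_exp]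
  congr 1
  simp [Complex.mul_re, Complex.mul_im]

lemma gauss_summable {α : ℂ} (hα : 0 < α.im) (β γ : ℂ) (k : ℕ) :
    Summable fun n : ℤ => (|(n : ℝ)|) ^ k * ‖e2 (α * (n : ℂ) ^ 2 + β * n + γ)‖ := by
  have h := (summable_pow_mul_jacobiTheta₂_term_bound (|β.im|) (T := 2 * α.im)
    (by linarith) k).mul_right (Real.exp (-(2 * Real.pi * γ.im)))
  refine Summable.of_nonneg_of_le (fun n => by positivity) (fun n => ?_) h
  rw [mul_assoc]
  have h0 : ((|n| : ℤ) : ℝ) = |(n : ℝ)| := by push_cast; rfl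
  rw [h0]
  refine mul_le_mul_of_nonneg_left ?_ (by positivity)
  rw [norm_e2, ← Real.exp_add]
  apply Real.exp_le_exp.mpr
  have him : (α * (n : ℂ) ^ 2 + β * n + γ).im = α.im * (n : ℝ) ^ 2 + β.im * n + γ.im := by
    have : ((n : ℂ)) ^ 2 = (((n : ℝ) ^ 2 : ℝ) : ℂ) := by push_cast; ring
    rw [this, Complex.add_im, Complex.add_im, Complex.im_mul_ofReal,
      show (n : ℂ) = ((n : ℝ) : ℂ) by push_cast; ring, Complex.im_mul_ofReal]
  rw [him]
  have h1 : -(|β.im| * |(n : ℝ)|) ≤ β.im * n := by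
    rw [← abs_mul]; exact neg_abs_le _
  nlinarith [Real.pi_pos, mul_le_mul_of_nonneg_left h1 Real.pi_pos.le]

lemma gauss_summable0 {α : ℂ} (hα : 0 < α.im) (β γ : ℂ) :
    Summable fun n : ℤ => ‖e2 (α * (n : ℂ) ^ 2 + β * n + γ)‖ := by
  simpa using gauss_summable hα β γ 0

lemma inv_bounded {q x : ℂ} (hq0 : q ≠ 0) (hq : ‖q‖ < 1) (hx : x ≠ 0) :
    ∃ C : ℝ, 0 ≤ C ∧ ∀ n : ℤ, ‖(1 - x * q ^ (2 * n))⁻¹‖ ≤ C := by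
  have hq2 : ‖q ^ 2‖ < 1 := by
    rw [norm_pow]; exact pow_lt_one₀ (norm_nonneg _) hq (by norm_num)
  have t0 : Tendsto (fun n : ℕ => (q ^ 2) ^ n) atTop (𝓝 0) :=
    tendsto_pow_atTop_nhds_zero_of_norm_lt_one hq2
  have t1 : Tendsto (fun n : ℕ => ‖(1 - x * q ^ (2 * (n : ℤ)))⁻¹‖) atTop (𝓝 ‖((1 : ℂ) - x * 0)⁻¹‖) := by
    have : (fun n : ℕ => ‖(1 - x * q ^ (2 * (n : ℤ)))⁻¹‖) =
        fun n : ℕ => ‖(1 - x * (q ^ 2) ^ n)⁻¹‖ := by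
      funext n
      rw [show (2 * (n : ℤ)) = ((2 * n : ℕ) : ℤ) by push_cast; ring, zpow_natCast, pow_mul]
    rw [this]
    exact (((t0.const_mul x).const_sub 1).inv₀ (by simp)).norm
  have t2 : Tendsto (fun n : ℕ => ‖(1 - x * q ^ (2 * (-(n : ℤ))))⁻¹‖) atTop
      (𝓝 ‖(0 : ℂ) * (0 - x)⁻¹‖) := by
    have : (fun n : ℕ => ‖(1 - x * q ^ (2 * (-(n : ℤ))))⁻¹‖) =
        fun n : ℕ => ‖(q ^ 2) ^ n * ((q ^ 2) ^ n - x)⁻¹‖ := by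
      funext n
      rw [show (2 * (-(n : ℤ))) = -((2 * n : ℕ) : ℤ) by push_cast; ring, zpow_neg, zpow_natCast,
        pow_mul]
      have hne : (q ^ 2) ^ n ≠ 0 := pow_ne_zero _ (pow_ne_zero _ hq0)
      congr 1
      generalize (q ^ 2) ^ n = t at hne
      rw [show (1 - x * t⁻¹) = t⁻¹ * (t - x) by field_simp, mul_inv, inv_inv]
    rw [this]
    exact (t0.mul ((t0.sub_const x).inv₀ (by simpa using hx))).norm
  obtain ⟨C1, h1⟩ := t1.bddAbove_range
  obtain ⟨C2, h2⟩ := t2.bddAbove_range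
  refine ⟨max C1 C2, ?_, ?_⟩
  · exact le_max_of_le_left ((norm_nonneg _).trans (h1 ⟨0, rfl⟩))
  · intro n
    obtain ⟨k, rfl | rfl⟩ := n.eq_nat_or_neg
    · exact le_max_of_le_left (h1 ⟨k, rfl⟩)
    · exact le_max_of_le_right (h2 ⟨k, rfl⟩)

lemma tsum_shift_range (g : ℤ → ℂ) (N K : ℕ) (h1 : ∀ n : ℤ, n < -N → g n = 0)
    (h2 : ∀ n : ℤ, (K : ℤ) - N ≤ n → g n = 0) :
    ∑' n : ℤ, g n = ∑ i ∈ Finset.range K, g ((i : ℤ) - N) := by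
  rw [tsum_eq_sum (s := (Finset.range K).map ⟨fun i : ℕ => (i : ℤ) - N, fun a b h => by
    simpa using h⟩), Finset.sum_map]
  · rfl
  · intro b hb
    by_cases hb1 : b < -N
    · exact h1 b hb1
    by_cases hb2 : (K : ℤ) - N ≤ b
    · exact h2 b hb2
    exfalso
    apply hb
    rw [Finset.mem_map]
    exact ⟨(b + N).toNat, by rw [Finset.mem_range]; omega, by
      show (((b + N).toNat : ℕ) : ℤ) - N = b; omega⟩

lemma poch_tendsto {q : ℂ} (hq : ‖q‖ < 1) :
    Tendsto (fun n : ℕ => ipoch q n) atTop (𝓝 (∏' k : ℕ, (1 - q ^ (2 * (k + 1))))⁻¹) ∧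
    (∏' k : ℕ, (1 - q ^ (2 * (k + 1)))) ≠ 0 := by
  have hq2 : ‖q ^ 2‖ < 1 := by
    rw [norm_pow]; exact pow_lt_one₀ (norm_nonneg _) hq (by norm_num)
  have hne : (∏' k : ℕ, (1 - q ^ (2 * (k + 1)))) ≠ 0 := by
    have := tprod_one_add_ne_zero_of_summable (f := fun n : ℕ ↦ -(q ^ 2) ^ (n + 1))
      (fun i => by
        rw [← sub_eq_add_neg, ← pow_mul]; exact one_sub_pow_ne hq (by omega))
      (by simpa using (summable_nat_add_iff 1).mpr
            (summable_geometric_of_lt_one (norm_nonneg _) hq2))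
    simpa only [← sub_eq_add_neg, ← pow_mul] using this
  refine ⟨?_, hne⟩
  have hm := ModularForm.multipliable_one_sub_pow hq2
  have := hm.hasProd.tendsto_prod_nat
  simp only [← pow_mul] at this
  simp_rw [ipoch_nat]
  exact this.inv₀ hne

lemma ipoch_bounded {q : ℂ} (hq : ‖q‖ < 1) : ∃ C : ℝ, 0 ≤ C ∧ ∀ n : ℤ, ‖ipoch q n‖ ≤ C := by
  obtain ⟨C, hC⟩ := (poch_tendsto hq).1.norm.bddAbove_range
  have h0 : 0 ≤ C := (norm_nonneg _).trans (hC ⟨0, rfl⟩)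
  refine ⟨C, h0, fun n => ?_⟩
  by_cases hn : n < 0
  · rw [ipoch_neg q hn]; simpa using h0
  · obtain ⟨k, rfl⟩ : ∃ k : ℕ, n = k := ⟨n.toNat, by omega⟩
    exact hC ⟨k, rfl⟩

lemma ipoch_tendsto_shift {q : ℂ} (hq : ‖q‖ < 1) (f : ℕ → ℤ) (hf : Tendsto f atTop atTop) :
    Tendsto (fun N : ℕ => ipoch q (f N)) atTop (𝓝 (∏' k : ℕ, (1 - q ^ (2 * (k + 1))))⁻¹) := by
  have h2 : Tendsto (fun N : ℕ => (f N).toNat) atTop atTop := by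
    rw [tendsto_atTop] at hf ⊢
    intro b
    filter_upwards [hf b] with N hN
    omega
  refine ((poch_tendsto hq).1.comp h2).congr' ?_
  rw [tendsto_atTop] at hf
  filter_upwards [hf 0] with N hN
  simp only [Function.comp]
  congr 1
  omega

/-- The key expansion: `S(x) A(x) = (Q;Q)_∞^3`. -/
lemma theta_mul_appell {q x : ℂ} (hq0 : q ≠ 0) (hq : ‖q‖ < 1) (hx : x ≠ 0)
    (hxq : ∀ i : ℤ, 1 - x * q ^ (2 * i) ≠ 0)
    (hs1 : Summable fun l : ℤ => ‖q ^ (l * (l - 1)) * x ^ l‖)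
    (hs2 : Summable fun n : ℤ => ‖q ^ (n * (n + 1)) * (1 - x * q ^ (2 * n))⁻¹‖) :
    (∑' l : ℤ, (-1 : ℂ) ^ l * q ^ (l * (l - 1)) * x ^ l) *
      (∑' n : ℤ, (-1 : ℂ) ^ n * q ^ (n * (n + 1)) * (1 - x * q ^ (2 * n))⁻¹) =
      (∏' k : ℕ, (1 - q ^ (2 * (k + 1)))) ^ 3 := by
  set P := ∏' k : ℕ, (1 - q ^ (2 * (k + 1))) with hP
  obtain ⟨C, hC0, hC⟩ := ipoch_bounded hq
  have hPne : P ≠ 0 := (poch_tendsto hq).2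
  have hnorm1 : ∀ n : ℤ, ‖(-1 : ℂ) ^ n‖ = 1 := fun n => by rw [norm_zpow]; simp
  have hlim1 : ∀ c : ℤ, ∀ e : ℤ, (0 < e) → Tendsto (fun N : ℕ => e * (N : ℤ) + c) atTop atTop := by
    intro c e he
    rw [tendsto_atTop]
    intro b
    filter_upwards [eventually_ge_atTop (b - c).toNat] with N hN
    have h1 : b - c ≤ (N : ℤ) := by omega
    have h2 : (0 : ℤ) ≤ N := by omega
    nlinarith
  -- inverse of P_{2N+1} is bounded and converges
  have hPt : Tendsto (fun N : ℕ => (ipoch q (2 * (N : ℤ) + 1))⁻¹) atTop (𝓝 P) := by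
    have := (ipoch_tendsto_shift hq _ (hlim1 1 2 (by norm_num))).inv₀ (inv_ne_zero hPne)
    simpa [← hP] using this
  obtain ⟨C2, hC2⟩ := hPt.norm.bddAbove_range
  have hC2' : ∀ N : ℕ, ‖(ipoch q (2 * (N : ℤ) + 1))⁻¹‖ ≤ C2 := fun N => hC2 ⟨N, rfl⟩
  have hC20 : 0 ≤ C2 := (norm_nonneg _).trans (hC2' 0)
  set f1 : ℕ → ℤ → ℂ := fun N l => ((-1 : ℂ) ^ l * q ^ (l * (l - 1)) * x ^ l) *
    ((ipoch q (2 * (N : ℤ) + 1))⁻¹ * ipoch q (N + l) * ipoch q (N + 1 - l)) with hf1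
  set f2 : ℕ → ℤ → ℂ := fun N n => ((-1 : ℂ) ^ n * q ^ (n * (n + 1)) * (1 - x * q ^ (2 * n))⁻¹) *
    (ipoch q (N + n) * ipoch q (N - n)) with hf2
  have T1 : Tendsto (fun N => ∑' l, f1 N l) atTop
      (𝓝 (∑' l : ℤ, ((-1 : ℂ) ^ l * q ^ (l * (l - 1)) * x ^ l) * (P * P⁻¹ * P⁻¹))) := by
    apply tendsto_tsum_of_dominated_convergence (hs1.mul_right (C2 * C * C))
    · intro l
      refine Tendsto.const_mul _ ((hPt.mul ?_).mul ?_)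
      · have := ipoch_tendsto_shift hq _ (hlim1 l 1 (by norm_num))
        simpa using this
      · have := ipoch_tendsto_shift hq _ (hlim1 (1 - l) 1 (by norm_num))
        simpa [add_sub_assoc] using this
    · refine Eventually.of_forall fun N l => ?_
      simp only [hf1]
      rw [norm_mul, mul_assoc ((-1 : ℂ) ^ l), norm_mul ((-1 : ℂ) ^ l), hnorm1, one_mul]
      refine mul_le_mul_of_nonneg_left ?_ (norm_nonneg _)
      rw [norm_mul, norm_mul]
      have := hC2' N; have := hC (N + l); have := hC (N + 1 - l)
      gcongr
  have T2 : Tendsto (fun N => ∑' l, f2 N l) atTop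
      (𝓝 (∑' n : ℤ, ((-1 : ℂ) ^ n * q ^ (n * (n + 1)) * (1 - x * q ^ (2 * n))⁻¹) *
        (P⁻¹ * P⁻¹))) := by
    apply tendsto_tsum_of_dominated_convergence (hs2.mul_right (C * C))
    · intro l
      refine Tendsto.const_mul _ (Tendsto.mul ?_ ?_)
      · have := ipoch_tendsto_shift hq _ (hlim1 l 1 (by norm_num))
        simpa using this
      · have := ipoch_tendsto_shift hq _ (hlim1 (- l) 1 (by norm_num))
        simpa [← sub_eq_add_neg] using this
    · refine Eventually.of_forall fun N l => ?_
      simp only [hf2]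
      rw [norm_mul, mul_assoc ((-1 : ℂ) ^ l), norm_mul ((-1 : ℂ) ^ l), hnorm1, one_mul]
      refine mul_le_mul_of_nonneg_left ?_ (norm_nonneg _)
      rw [norm_mul]
      have := hC (N + l); have := hC (N - l)
      gcongr
  rw [tsum_mul_right] at T1 T2
  have hprod : ∀ N : ℕ, (∑' l, f1 N l) * (∑' l, f2 N l) = 1 := by
    intro N
    set y := x * q ^ (-(2 * (N : ℤ))) with hy
    have hyi : ∀ i : ℤ, y * q ^ (2 * i) = x * q ^ (2 * (i - N)) := by
      intro i
      rw [hy, mul_assoc, ← zpow_add₀ hq0]; congr 2; ring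
    have hy1 : ∀ i : ℤ, 1 - y * q ^ (2 * i) ≠ 0 := by
      intro i
      rw [hyi]; exact hxq _
    set W := ∏ i ∈ Finset.range (2 * N + 1), (1 - y * q ^ (2 * (i : ℤ))) with hW
    have hWne : W ≠ 0 := Finset.prod_ne_zero_iff.mpr fun i _ => hy1 _
    have hsq : ∀ n : ℤ, (-1 : ℂ) ^ n * (-1) ^ n = 1 := by
      intro n; rw [← mul_zpow]; simp
    have A1 : ∑' l, f1 N l = ((-1 : ℂ) ^ (N : ℤ) * x ^ (-(N : ℤ)) * q ^ ((N : ℤ) * (N + 1))) * W := by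
      rw [tsum_shift_range (f1 N) N (2 * N + 1 + 1)]
      · rw [hW, q_binomial hq0 hq, Finset.mul_sum]
        refine Finset.sum_congr rfl fun i _ => ?_
        simp only [hf1]
        push_cast
        rw [show (N : ℤ) + ((i : ℤ) - N) = i by ring,
          show (N : ℤ) + 1 - ((i : ℤ) - N) = 2 * N + 1 - i by ring]
        have s1 : (-1 : ℂ) ^ ((i : ℤ) - N) = (-1) ^ (N : ℤ) * (-1) ^ (i : ℤ) := by
          rw [zpow_sub₀ (by norm_num), div_eq_iff (zpow_ne_zero _ (by norm_num))]
          linear_combination (-(-1 : ℂ) ^ (i : ℤ)) * hsq N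
        have s2 : q ^ (((i : ℤ) - N) * ((i : ℤ) - N - 1)) * x ^ ((i : ℤ) - N) =
            x ^ (-(N : ℤ)) * q ^ ((N : ℤ) * (N + 1)) * q ^ ((i : ℤ) * (i - 1)) * y ^ (i : ℤ) := by
          rw [hy, mul_zpow, ← zpow_mul, sub_eq_neg_add (i : ℤ) N, zpow_add₀ hx,
            show (-(N : ℤ) + i) * (-(N : ℤ) + i - 1) =
              (N : ℤ) * (N + 1) + (i : ℤ) * (i - 1) + -(2 * (N : ℤ)) * i by ring,
            zpow_add₀ hq0, zpow_add₀ hq0]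
          ring
        rw [mul_assoc ((-1 : ℂ) ^ ((i : ℤ) - N)), s2, s1]
        ring
      · intro n hn
        simp only [hf1]
        rw [ipoch_neg q (n := (N : ℤ) + n) (by omega)]; simp
      · intro n hn
        push_cast at hn
        simp only [hf1]
        rw [ipoch_neg q (n := (N : ℤ) + 1 - n) (by omega)]; simp
    have A2 : ∑' l, f2 N l = ((-1 : ℂ) ^ (N : ℤ) * q ^ ((N : ℤ) * (N - 1))) * (y ^ (N : ℤ) * W⁻¹) := by
      rw [tsum_shift_range (f2 N) N (2 * N + 1)]
      · rw [hW, partial_frac hq0 hq (2 * N) N (by omega) y hy1, Finset.mul_sum]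
        refine Finset.sum_congr rfl fun i _ => ?_
        simp only [hf2]
        push_cast
        rw [show (N : ℤ) + ((i : ℤ) - N) = i by ring,
          show (N : ℤ) - ((i : ℤ) - N) = 2 * N - i by ring, hyi]
        have s1 : (-1 : ℂ) ^ ((i : ℤ) - N) = (-1) ^ (N : ℤ) * (-1) ^ (i : ℤ) := by
          rw [zpow_sub₀ (by norm_num), div_eq_iff (zpow_ne_zero _ (by norm_num))]
          linear_combination (-(-1 : ℂ) ^ (i : ℤ)) * hsq N
        have s2 : q ^ (((i : ℤ) - N) * ((i : ℤ) - N + 1)) =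
            q ^ ((N : ℤ) * (N - 1)) * q ^ ((i : ℤ) * (i + 1) - 2 * i * N) := by
          rw [← zpow_add₀ hq0]; congr 1; ring
        rw [s2, s1]
        ring
      · intro n hn
        simp only [hf2]
        rw [ipoch_neg q (n := (N : ℤ) + n) (by omega)]; simp
      · intro n hn
        push_cast at hn
        simp only [hf2]
        rw [ipoch_neg q (n := (N : ℤ) - n) (by omega)]; simp
    rw [A1, A2, hy, mul_zpow, ← zpow_mul, zpow_neg x]
    have hxN : x ^ (N : ℤ) ≠ 0 := zpow_ne_zero _ hx
    have hq3 : q ^ ((N : ℤ) * (N + 1)) * q ^ ((N : ℤ) * (N - 1)) * q ^ (-(2 * (N : ℤ)) * N) = 1 := by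
      rw [← zpow_add₀ hq0, ← zpow_add₀ hq0,
        show (N : ℤ) * (N + 1) + (N : ℤ) * (N - 1) + -(2 * (N : ℤ)) * N = 0 by ring, zpow_zero]
    calc _ = ((-1 : ℂ) ^ (N : ℤ) * (-1) ^ (N : ℤ)) * ((x ^ (N : ℤ))⁻¹ * x ^ (N : ℤ)) * (W * W⁻¹) *
          (q ^ ((N : ℤ) * (N + 1)) * q ^ ((N : ℤ) * (N - 1)) * q ^ (-(2 * (N : ℤ)) * N)) := by ring
      _ = 1 := by rw [hsq, hq3, inv_mul_cancel₀ hxN, mul_inv_cancel₀ hWne]; ring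
  have hT := T1.mul T2
  simp_rw [hprod] at hT
  have := tendsto_nhds_unique hT tendsto_const_nhds
  generalize (∑' n : ℤ, (-1 : ℂ) ^ n * q ^ (n * (n + 1)) * (1 - x * q ^ (2 * n))⁻¹) = AA at this ⊢
  generalize (∑' l : ℤ, (-1 : ℂ) ^ l * q ^ (l * (l - 1)) * x ^ l) = SS at this ⊢
  field_simp at this
  linear_combination this

/-- `(-i) η(2τ)^3 / ϑ₁₁(2τ,2z)` as an Appell sum. -/
lemma eta_div_mumford {τ : ℂ} (hτ : 0 < τ.im) (z : ℂ)
    (hz : ∀ i : ℤ, 1 - e2 (2 * z + 2 * τ * i) ≠ 0) :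
    -Complex.I * eta (2 * τ) ^ 3 / mumford 1 1 (2 * τ) (2 * z) =
      ∑' n : ℤ, (-1 : ℂ) ^ n * (e2 (τ * (n * (n + 1)) + z) / (1 - e2 (2 * z + 2 * τ * n))) := by
  set q := e2 τ with hq_def
  have hq0 : q ≠ 0 := e2_ne _
  have hq : ‖q‖ < 1 := by
    rw [hq_def, norm_e2, Real.exp_lt_one_iff]
    nlinarith [mul_pos Real.pi_pos hτ]
  set x := e2 (2 * z) with hx_def
  have hx : x ≠ 0 := e2_ne _
  have hxi : ∀ i : ℤ, x * q ^ (2 * i) = e2 (2 * z + 2 * τ * i) := by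
    intro i
    rw [hx_def, hq_def, e2_zpow, ← e2_add]; congr 1; push_cast; ring
  have hxq : ∀ i : ℤ, 1 - x * q ^ (2 * i) ≠ 0 := by
    intro i; rw [hxi]; exact hz i
  have hs1 : Summable fun l : ℤ => ‖q ^ (l * (l - 1)) * x ^ l‖ := by
    refine (gauss_summable0 hτ (-τ + 2 * z) 0).congr fun l => ?_
    rw [hq_def, hx_def, e2_zpow, e2_zpow, ← e2_add]; congr 2; push_cast; ring
  have hs2 : Summable fun n : ℤ => ‖q ^ (n * (n + 1)) * (1 - x * q ^ (2 * n))⁻¹‖ := by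
    obtain ⟨C, hC0, hC⟩ := inv_bounded hq0 hq hx
    refine Summable.of_nonneg_of_le (fun n => norm_nonneg _) (fun n => ?_)
      ((gauss_summable0 hτ τ 0).mul_right C)
    rw [norm_mul]
    refine mul_le_mul (le_of_eq ?_) (hC n) (norm_nonneg _) (norm_nonneg _)
    rw [hq_def, e2_zpow]; congr 2; push_cast; ring
  have key := theta_mul_appell hq0 hq hx hxq hs1 hs2
  set S := ∑' l : ℤ, (-1 : ℂ) ^ l * q ^ (l * (l - 1)) * x ^ l with hS
  set A := ∑' n : ℤ, (-1 : ℂ) ^ n * q ^ (n * (n + 1)) * (1 - x * q ^ (2 * n))⁻¹ with hA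
  have hSne : S ≠ 0 := by
    intro h
    rw [h, zero_mul] at key
    exact pow_ne_zero 3 (poch_tendsto hq).2 key.symm
  have heta : eta (2 * τ) ^ 3 = e2 (τ / 4) * (S * A) := by
    rw [key]
    unfold eta
    rw [mul_pow, qpow_eq, e2_pow]
    congr 2
    · push_cast; ring
    · congr 1; funext k
      rw [qpow_eq, hq_def, e2_pow]; congr 2; push_cast; ring
  have hmum : mumford 1 1 (2 * τ) (2 * z) = -Complex.I * e2 (τ / 4) * e2 (-z) * S := by
    unfold mumford
    rw [hS, ← tsum_mul_left, ← (Equiv.addRight (-1 : ℤ)).tsum_eq]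
    refine tsum_congr fun n => ?_
    have hI : Complex.I = e2 (1 / 4) := by
      unfold e2
      rw [show (2 * Real.pi * Complex.I * (1 / 4) : ℂ) = Real.pi / 2 * Complex.I by ring,
        Complex.exp_pi_div_two_mul_I]
    have hnI : -Complex.I = e2 (-(1 / 4)) := by
      rw [e2_neg, ← hI, Complex.inv_I]
    rw [hnI, hq_def, hx_def, ← e2_half, e2_zpow, e2_zpow]
    simp only [← e2_add]
    unfold e2
    congr 1
    simp only [Equiv.coe_addRight]
    push_cast
    ring
  have hA2 : ∑' n : ℤ, (-1 : ℂ) ^ n * (e2 (τ * (n * (n + 1)) + z) / (1 - e2 (2 * z + 2 * τ * n))) =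
      e2 z * A := by
    rw [hA, ← tsum_mul_left]
    refine tsum_congr fun n => ?_
    rw [hxi, hq_def, e2_zpow, e2_add, div_eq_mul_inv,
      show τ * ((n : ℂ) * (n + 1)) = ((n * (n + 1) : ℤ) : ℂ) * τ by push_cast; ring]
    ring
  rw [hA2, heta, hmum, e2_neg]
  have h1 := e2_ne z
  have h2 := e2_ne (τ / 4)
  have h3 := Complex.I_ne_zero
  field_simp

/-! ### Part 3: signed interval sums and the core identity -/

/-- Signed sum over an integer interval. -/
def sI (a b : ℤ) (f : ℤ → ℂ) : ℂ :=
  ∑ i ∈ Finset.Ico a b, f i - ∑ i ∈ Finset.Ico b a, f i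

lemma sI_self (a : ℤ) (f : ℤ → ℂ) : sI a a f = 0 := by simp [sI]

lemma sI_succ (a b : ℤ) (f : ℤ → ℂ) : sI a (b + 1) f = sI a b f + f b := by
  unfold sI
  by_cases h : a ≤ b
  · have h1 : Finset.Ico a (b + 1) = insert b (Finset.Ico a b) := by
      ext x; simp only [Finset.mem_Ico, Finset.mem_insert]; omega
    rw [h1, Finset.sum_insert (by simp), Finset.Ico_eq_empty (by omega : ¬ b + 1 < a),
      Finset.Ico_eq_empty (by omega : ¬ b < a)]
    simp [add_comm]
  · have h1 : Finset.Ico b a = insert b (Finset.Ico (b + 1) a) := by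
      ext x; simp only [Finset.mem_Ico, Finset.mem_insert]; omega
    rw [h1, Finset.sum_insert (by simp), Finset.Ico_eq_empty (by omega : ¬ a < b + 1),
      Finset.Ico_eq_empty (by omega : ¬ a < b)]
    ring

lemma sI_of_diff (a b : ℤ) (f G : ℤ → ℂ) (h : ∀ i, G (i + 1) = G i + f i) :
    sI a b f = G b - G a := by
  induction b using Int.inductionOn' (b := a) with
  | zero => simp [sI_self]
  | succ k _ ih => rw [sI_succ, ih, h]; ring
  | pred k _ ih =>
    have h1 := sI_succ a (k - 1) f
    have h2 := h (k - 1)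
    rw [show k - 1 + 1 = k by ring] at h1 h2
    rw [h1, h2] at ih
    linear_combination ih

lemma sI_split (a b : ℤ) (f : ℤ → ℂ) : sI a b f = sI 0 b f - sI 0 a f :=
  sI_of_diff a b f (fun i => sI 0 i f) fun i => sI_succ 0 i f

lemma sI_geom (a b : ℤ) (c u : ℂ) (hu0 : u ≠ 0) (hu1 : 1 - u ≠ 0) :
    sI a b (fun i => c * u ^ i) = c * (u ^ a - u ^ b) / (1 - u) := by
  rw [sI_of_diff a b _ (fun i => - c * u ^ i / (1 - u))]
  · field_simp; ring
  · intro i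
    rw [zpow_add_one₀ hu0]; field_simp; ring

lemma sI_norm_le (n : ℤ) (f : ℤ → ℂ) (B : ℝ) (hB : 0 ≤ B)
    (h1 : ∀ i, 0 ≤ i → i < n → ‖f i‖ ≤ B) (h2 : ∀ i, n ≤ i → i < 0 → ‖f i‖ ≤ B) :
    ‖sI 0 n f‖ ≤ |(n : ℝ)| * B := by
  unfold sI
  rcases le_total 0 n with h | h
  · rw [Finset.Ico_eq_empty (by omega : ¬ n < 0), Finset.sum_empty, sub_zero]
    refine (norm_sum_le_of_le _ (fun i hi => h1 i (Finset.mem_Ico.mp hi).1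
      (Finset.mem_Ico.mp hi).2)).trans ?_
    rw [Finset.sum_const, nsmul_eq_mul, Int.card_Ico, abs_of_nonneg (by exact_mod_cast h)]
    refine mul_le_mul_of_nonneg_right (le_of_eq ?_) hB
    have : (((n - 0).toNat : ℕ) : ℤ) = n := by omega
    exact_mod_cast this
  · rw [Finset.Ico_eq_empty (by omega : ¬ 0 < n), Finset.sum_empty, zero_sub, norm_neg]
    refine (norm_sum_le_of_le _ (fun i hi => h2 i (Finset.mem_Ico.mp hi).1
      (Finset.mem_Ico.mp hi).2)).trans ?_
    rw [Finset.sum_const, nsmul_eq_mul, Int.card_Ico, abs_of_nonpos (by exact_mod_cast h)]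
    refine mul_le_mul_of_nonneg_right (le_of_eq ?_) hB
    have : (((0 - n).toNat : ℕ) : ℤ) = -n := by omega
    exact_mod_cast this

lemma sI_tsum (a b : ℤ) {ι : Type*} (f : ι → ℤ → ℂ) (hf : ∀ i, Summable fun x => f x i) :
    ∑' x, sI a b (f x) = sI a b (fun i => ∑' x, f x i) := by
  unfold sI
  rw [Summable.tsum_sub (summable_sum fun i _ => hf i) (summable_sum fun i _ => hf i),
    Summable.tsum_finsetSum fun i _ => hf i, Summable.tsum_finsetSum fun i _ => hf i]

lemma sI_mul (a b : ℤ) (c : ℂ) (f : ℤ → ℂ) : c * sI a b f = sI a b fun i => c * f i := by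
  unfold sI
  rw [mul_sub, Finset.mul_sum, Finset.mul_sum]

/-- The basic monomial. -/
def Fk (M : ℕ) (τ z1 z2 : ℂ) (J n k : ℤ) : ℂ :=
  e2 (τ * ((J : ℂ) ^ 2 + M * (n : ℂ) ^ 2) + M * n * (z1 + z2) + k * (τ * (J + n) + z1))

lemma e2_affine_le (w v : ℂ) (k n : ℤ) (h : (0 ≤ k ∧ k ≤ 2 * n) ∨ (2 * n ≤ k ∧ k ≤ 0)) :
    ‖e2 (w + k * v)‖ ≤ ‖e2 w‖ + ‖e2 (w + 2 * n * v)‖ := by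
  have hk : (w + (k : ℂ) * v).im = w.im + k * v.im := by
    simp [Complex.add_im, Complex.mul_im]
  have hn : (w + 2 * (n : ℂ) * v).im = w.im + 2 * n * v.im := by
    simp [Complex.add_im, Complex.mul_im]
  rw [norm_e2, norm_e2, norm_e2, hk, hn]
  have hh : (0 ≤ (k : ℝ) ∧ (k : ℝ) ≤ 2 * n) ∨ (2 * (n : ℝ) ≤ k ∧ (k : ℝ) ≤ 0) := by
    exact_mod_cast h
  have : 0 ≤ (k : ℝ) * v.im ∨ 2 * (n : ℝ) * v.im ≤ (k : ℝ) * v.im := by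
    rcases hh with ⟨a, b⟩ | ⟨a, b⟩ <;> rcases le_total 0 v.im with c | c
    · left; positivity
    · right; nlinarith
    · right; nlinarith
    · left; exact mul_nonneg_of_nonpos_of_nonpos b c
  have hp := Real.pi_pos
  rcases this with h | h
  · have : Real.exp (-(2 * Real.pi * (w.im + k * v.im))) ≤ Real.exp (-(2 * Real.pi * w.im)) := by
      apply Real.exp_le_exp.mpr; nlinarith
    linarith [Real.exp_pos (-(2 * Real.pi * (w.im + 2 * n * v.im)))]
  · have : Real.exp (-(2 * Real.pi * (w.im + k * v.im))) ≤
        Real.exp (-(2 * Real.pi * (w.im + 2 * n * v.im))) := by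
      apply Real.exp_le_exp.mpr; nlinarith
    linarith [Real.exp_pos (-(2 * Real.pi * w.im))]

/-- Shear `(J,n) ↦ (J,J+n)`. -/
def shear1 : ℤ × ℤ ≃ ℤ × ℤ where
  toFun p := (p.1, p.1 + p.2)
  invFun p := (p.1, p.2 - p.1)
  left_inv p := by simp
  right_inv p := by simp

/-- Shear `(J,n) ↦ (J+n,n)`. -/
def shear2 : ℤ × ℤ ≃ ℤ × ℤ where
  toFun p := (p.1 + p.2, p.2)
  invFun p := (p.1 - p.2, p.2)
  left_inv p := by simp
  right_inv p := by simp

lemma neg_one_zpow_mul_self (n : ℤ) : (-1 : ℂ) ^ n * (-1) ^ n = 1 := by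
  rw [← mul_zpow]; simp

lemma norm_neg_one_zpow (n : ℤ) : ‖(-1 : ℂ) ^ n‖ = 1 := by rw [norm_zpow]; simp

lemma Fk_summable_J {τ : ℂ} (hτ : 0 < τ.im) (M : ℕ) (z1 z2 : ℂ) (n k : ℤ) :
    Summable fun J : ℤ => (-1 : ℂ) ^ J * Fk M τ z1 z2 J n k := by
  apply Summable.of_norm
  refine (gauss_summable0 hτ (k * τ) (τ * (M * n ^ 2) + M * n * (z1 + z2) + k * (τ * n + z1))).congr
    fun J => ?_
  rw [norm_mul, norm_neg_one_zpow, one_mul]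
  unfold Fk
  congr 2; ring

lemma Fk_summable_n {τ : ℂ} (hτ : 0 < τ.im) {M : ℕ} (hM : 0 < M) (z1 z2 : ℂ) (J k : ℤ) :
    Summable fun n : ℤ => Fk M τ z1 z2 J n k := by
  apply Summable.of_norm
  have hM' : (0 : ℝ) < M := by exact_mod_cast hM
  have : 0 < (τ * M).im := by
    rw [show (M : ℂ) = ((M : ℝ) : ℂ) by push_cast; rfl, Complex.im_mul_ofReal]; positivity
  refine (gauss_summable0 this (M * (z1 + z2) + k * τ) (τ * J ^ 2 + k * (τ * J + z1))).congr
    fun n => ?_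
  unfold Fk
  congr 2; ring

lemma Fk_tsum_zero (M : ℕ) (τ z1 z2 : ℂ) (n i : ℤ) :
    ∑' J : ℤ, (-1 : ℂ) ^ J * Fk M τ z1 z2 J n (2 * i + 1) = 0 := by
  have h : ∑' J : ℤ, (-1 : ℂ) ^ J * Fk M τ z1 z2 J n (2 * i + 1) =
      - ∑' J : ℤ, (-1 : ℂ) ^ J * Fk M τ z1 z2 J n (2 * i + 1) := by
    conv_lhs => rw [← (Equiv.subLeft (-(2 * i + 1))).tsum_eq]
    rw [← tsum_neg]
    refine tsum_congr fun J => ?_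
    simp only [Equiv.subLeft_apply]
    have s : (-1 : ℂ) ^ (-(2 * i + 1) - J) = -(-1) ^ J := by
      rw [show -(2 * i + 1) - J = 2 * (-i - J - 1) + (1 + J) by ring,
        zpow_add₀ (by norm_num), zpow_mul, zpow_add₀ (by norm_num)]
      norm_num
    rw [s, neg_mul]
    congr 2
    unfold Fk
    congr 1
    push_cast
    ring
  have h2 : (2 : ℂ) * ∑' J : ℤ, (-1 : ℂ) ^ J * Fk M τ z1 z2 J n (2 * i + 1) = 0 := by
    linear_combination h
  simpa using h2

lemma S2_summable {τ : ℂ} (hτ : 0 < τ.im) {M : ℕ} (hM : 0 < M) (z1 z2 : ℂ) :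
    Summable fun p : ℤ × ℤ =>
      sI 0 p.2 (fun i => (-1 : ℂ) ^ p.1 * Fk M τ z1 z2 p.1 p.2 (2 * i + 1)) := by
  have hM' : (0 : ℝ) < M := by exact_mod_cast hM
  have h1 : 0 < (τ * M).im := by
    rw [show (M : ℂ) = ((M : ℝ) : ℂ) by push_cast; rfl, Complex.im_mul_ofReal]; positivity
  have h2 : 0 < (τ * (M + 1)).im := by
    rw [show (M : ℂ) + 1 = ((M + 1 : ℝ) : ℂ) by push_cast; rfl, Complex.im_mul_ofReal]; positivity
  have g0 := gauss_summable0 hτ 0 0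
  have g1 := gauss_summable h1 (M * (z1 + z2)) 0 1
  have g2 := gauss_summable h2 (M * (z1 + z2) + 2 * z1) 0 1
  have k1 := g0.mul_of_nonneg g1 (fun _ => norm_nonneg _) (fun _ => by positivity)
  have k2 := shear2.summable_iff.mpr
    (g0.mul_of_nonneg g2 (fun _ => norm_nonneg _) (fun _ => by positivity))
  refine Summable.of_norm_bounded (k1.add k2) fun p => ?_
  obtain ⟨J, n⟩ := p
  simp only [shear2, Function.comp, Equiv.coe_fn_mk, pow_one]
  refine (sI_norm_le n _ (‖Fk M τ z1 z2 J n 0‖ + ‖Fk M τ z1 z2 J n (2 * n)‖)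
    (by positivity) ?_ ?_).trans (le_of_eq ?_)
  · intro i hi1 hi2
    rw [norm_mul, norm_neg_one_zpow, one_mul]
    have := e2_affine_le (τ * ((J : ℂ) ^ 2 + M * (n : ℂ) ^ 2) + M * n * (z1 + z2))
      (τ * (J + n) + z1) (2 * i + 1) n (by omega)
    unfold Fk
    simpa using this
  · intro i hi1 hi2
    rw [norm_mul, norm_neg_one_zpow, one_mul]
    have := e2_affine_le (τ * ((J : ℂ) ^ 2 + M * (n : ℂ) ^ 2) + M * n * (z1 + z2))
      (τ * (J + n) + z1) (2 * i + 1) n (by omega)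
    unfold Fk
    simpa using this
  · rw [mul_add]
    congr 1
    · rw [mul_left_comm]
      congr 1
      rw [← norm_mul, ← e2_add]
      unfold Fk
      congr 2; push_cast; ring
    · rw [mul_left_comm]
      congr 1
      rw [← norm_mul, ← e2_add]
      unfold Fk
      congr 2; push_cast; ring

/-- Core identity. -/
lemma core {τ : ℂ} (hτ : 0 < τ.im) {M : ℕ} (hM : 0 < M) (z1 z2 : ℂ)
    (hz : ∀ i : ℤ, 1 - e2 (2 * z1 + 2 * τ * i) ≠ 0) :
    (Summable fun J : ℤ => sI 0 (M * J) fun i => (-1 : ℂ) ^ J *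
      ∑' n : ℤ, Fk M τ z1 z2 J n (2 * i + 1)) ∧
    (∑' l : ℤ, (-1 : ℂ) ^ l * e2 (τ * (M + 1) * (l : ℂ) ^ 2 + (M * (z1 - z2)) * l)) *
      (∑' j : ℤ, e2 (τ * M * (j : ℂ) ^ 2 + (M * (z1 + z2) + τ) * j + z1) /
        (1 - e2 (2 * z1 + 2 * τ * j))) -
    (∑' n : ℤ, (-1 : ℂ) ^ n * (e2 (τ * (n * (n + 1)) + z1) / (1 - e2 (2 * z1 + 2 * τ * n)))) *
      (∑' l : ℤ, (-1 : ℂ) ^ l * e2 (τ * (M + 1) * (l : ℂ) ^ 2 +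
        (z1 - z2 + (M + 1) * (z1 + z2)) * l)) =
    - ∑' J : ℤ, sI 0 (M * J) fun i => (-1 : ℂ) ^ J *
      ∑' n : ℤ, Fk M τ z1 z2 J n (2 * i + 1) := by
  have hM' : (0 : ℝ) < M := by exact_mod_cast hM
  have h1 : 0 < (τ * M).im := by
    rw [show (M : ℂ) = ((M : ℝ) : ℂ) by push_cast; rfl, Complex.im_mul_ofReal]; positivity
  have h2 : 0 < (τ * (M + 1)).im := by
    rw [show (M : ℂ) + 1 = ((M + 1 : ℝ) : ℂ) by push_cast; rfl, Complex.im_mul_ofReal]; positivity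
  -- bound on the denominators
  have hbd : ∃ C : ℝ, 0 ≤ C ∧ ∀ n : ℤ, ‖(1 - e2 (2 * z1 + 2 * τ * n))⁻¹‖ ≤ C := by
    have hq : ‖e2 τ‖ < 1 := by
      rw [norm_e2, Real.exp_lt_one_iff]
      nlinarith [mul_pos Real.pi_pos hτ]
    obtain ⟨C, hC0, hC⟩ := inv_bounded (e2_ne τ) hq (e2_ne (2 * z1))
    refine ⟨C, hC0, fun n => ?_⟩
    have := hC n
    rw [e2_zpow, ← e2_add] at this
    convert this using 5
    push_cast; ring
  obtain ⟨C, hC0, hC⟩ := hbd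
  have sgn : ∀ (f : ℤ → ℂ), Summable (fun n => ‖f n‖) → Summable fun n => ‖(-1 : ℂ) ^ n * f n‖ := by
    intro f hf
    refine hf.congr fun n => ?_
    rw [norm_mul, norm_neg_one_zpow, one_mul]
  have den : ∀ (f : ℤ → ℂ), Summable (fun n => ‖f n‖) →
      Summable fun n : ℤ => ‖f n / (1 - e2 (2 * z1 + 2 * τ * n))‖ := by
    intro f hf
    refine Summable.of_nonneg_of_le (fun n => norm_nonneg _) (fun n => ?_) (hf.mul_right C)
    rw [div_eq_mul_inv, norm_mul]
    exact mul_le_mul_of_nonneg_left (hC n) (norm_nonneg _)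
  have sT : Summable fun l : ℤ =>
      ‖(-1 : ℂ) ^ l * e2 (τ * (M + 1) * (l : ℂ) ^ 2 + (M * (z1 - z2)) * l)‖ := by
    apply sgn
    simpa using gauss_summable0 h2 (M * (z1 - z2)) 0
  have sTh : Summable fun l : ℤ => ‖(-1 : ℂ) ^ l * e2 (τ * (M + 1) * (l : ℂ) ^ 2 +
        (z1 - z2 + (M + 1) * (z1 + z2)) * l)‖ := by
    apply sgn
    simpa using gauss_summable0 h2 (z1 - z2 + (M + 1) * (z1 + z2)) 0
  have sP : Summable fun j : ℤ => ‖e2 (τ * M * (j : ℂ) ^ 2 + (M * (z1 + z2) + τ) * j + z1) /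
        (1 - e2 (2 * z1 + 2 * τ * j))‖ := den _ (gauss_summable0 h1 _ _)
  have sA : Summable fun n : ℤ => ‖(-1 : ℂ) ^ n * (e2 (τ * (n * (n + 1)) + z1) /
      (1 - e2 (2 * z1 + 2 * τ * n)))‖ := by
    apply sgn
    apply den
    refine (gauss_summable0 hτ τ z1).congr fun n => ?_
    congr 2; ring
  have q1 := shear1.summable_iff.mpr (summable_mul_of_summable_norm sT sP)
  have q2 := shear2.summable_iff.mpr (summable_mul_of_summable_norm sA sTh)
  rw [tsum_mul_tsum_of_summable_norm sT sP, tsum_mul_tsum_of_summable_norm sA sTh]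
  have S2 := S2_summable hτ hM z1 z2
  have point : ∀ p : ℤ × ℤ, sI 0 (M * p.1) (fun i => (-1 : ℂ) ^ p.1 *
      Fk M τ z1 z2 p.1 p.2 (2 * i + 1)) =
      sI 0 p.2 (fun i => (-1 : ℂ) ^ p.1 * Fk M τ z1 z2 p.1 p.2 (2 * i + 1)) -
      (((fun z : ℤ × ℤ => (-1 : ℂ) ^ z.1 * e2 (τ * (M + 1) * (z.1 : ℂ) ^ 2 + (M * (z1 - z2)) * z.1) *
        (e2 (τ * M * (z.2 : ℂ) ^ 2 + (M * (z1 + z2) + τ) * z.2 + z1) /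
        (1 - e2 (2 * z1 + 2 * τ * z.2)))) ∘ shear1) p -
       ((fun z : ℤ × ℤ => (-1 : ℂ) ^ z.1 * (e2 (τ * (z.1 * (z.1 + 1)) + z1) /
        (1 - e2 (2 * z1 + 2 * τ * z.1))) * ((-1 : ℂ) ^ z.2 * e2 (τ * (M + 1) * (z.2 : ℂ) ^ 2 +
        (z1 - z2 + (M + 1) * (z1 + z2)) * z.2))) ∘ shear2) p) := by
    rintro ⟨J, n⟩
    simp only [Function.comp, shear1, shear2, Equiv.coe_fn_mk]
    have hs := sI_split n (M * J) (fun i => (-1 : ℂ) ^ J * Fk M τ z1 z2 J n (2 * i + 1))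
    have hu1 := hz (J + n)
    set u := e2 (2 * z1 + 2 * τ * ((J + n : ℤ) : ℂ)) with hu
    have hF : (fun i : ℤ => (-1 : ℂ) ^ J * Fk M τ z1 z2 J n (2 * i + 1)) =
        fun i => ((-1 : ℂ) ^ J * Fk M τ z1 z2 J n 1) * u ^ i := by
      funext i
      rw [hu, e2_zpow, mul_assoc]
      congr 1
      unfold Fk
      rw [← e2_add]
      congr 1; push_cast; ring
    have hg := sI_geom n (M * J) ((-1 : ℂ) ^ J * Fk M τ z1 z2 J n 1) u (e2_ne _) hu1
    rw [← hF] at hg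
    have c1 : e2 (τ * (M + 1) * (J : ℂ) ^ 2 + (M * (z1 - z2)) * J) *
        e2 (τ * M * ((J + n : ℤ) : ℂ) ^ 2 + (M * (z1 + z2) + τ) * ((J + n : ℤ) : ℂ) + z1) =
        Fk M τ z1 z2 J n 1 * u ^ ((M : ℤ) * J) := by
      rw [hu, e2_zpow]
      unfold Fk
      rw [← e2_add, ← e2_add]
      congr 1; push_cast; ring
    have c2 : e2 (τ * (((J + n : ℤ) : ℂ) * (((J + n : ℤ) : ℂ) + 1)) + z1) *
        e2 (τ * (M + 1) * (n : ℂ) ^ 2 + (z1 - z2 + (M + 1) * (z1 + z2)) * n) =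
        Fk M τ z1 z2 J n 1 * u ^ n := by
      rw [hu, e2_zpow]
      unfold Fk
      rw [← e2_add, ← e2_add]
      congr 1; push_cast; ring
    have c3 : (-1 : ℂ) ^ (J + n) * (-1) ^ n = (-1) ^ J := by
      rw [zpow_add₀ (by norm_num), mul_assoc, neg_one_zpow_mul_self, mul_one]
    have d1 : (-1 : ℂ) ^ J * e2 (τ * (M + 1) * (J : ℂ) ^ 2 + (M * (z1 - z2)) * J) *
        (e2 (τ * M * ((J + n : ℤ) : ℂ) ^ 2 + (M * (z1 + z2) + τ) * ((J + n : ℤ) : ℂ) + z1) / (1 - u))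
        = (-1 : ℂ) ^ J * (Fk M τ z1 z2 J n 1 * u ^ ((M : ℤ) * J)) / (1 - u) := by
      rw [← c1]; ring
    have d2 : (-1 : ℂ) ^ (J + n) * (e2 (τ * (((J + n : ℤ) : ℂ) * (((J + n : ℤ) : ℂ) + 1)) + z1) /
        (1 - u)) * ((-1 : ℂ) ^ n *
        e2 (τ * (M + 1) * (n : ℂ) ^ 2 + (z1 - z2 + (M + 1) * (z1 + z2)) * n)) =
        (-1 : ℂ) ^ J * (Fk M τ z1 z2 J n 1 * u ^ n) / (1 - u) := by
      rw [← c2, ← c3]; ring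
    rw [d1, d2]
    rw [hs] at hg
    linear_combination hg
  have S1 : Summable fun p : ℤ × ℤ => sI 0 (M * p.1) (fun i => (-1 : ℂ) ^ p.1 *
      Fk M τ z1 z2 p.1 p.2 (2 * i + 1)) :=
    (S2.sub (q1.sub q2)).congr fun p => (point p).symm
  have in1 : ∀ J : ℤ, ∑' n : ℤ, sI 0 (M * J) (fun i => (-1 : ℂ) ^ J *
      Fk M τ z1 z2 J n (2 * i + 1)) = sI 0 (M * J) fun i => (-1 : ℂ) ^ J *
      ∑' n : ℤ, Fk M τ z1 z2 J n (2 * i + 1) := by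
    intro J
    rw [sI_tsum]
    · simp_rw [tsum_mul_left]
    · intro i
      exact (Fk_summable_n hτ hM z1 z2 J _).mul_left _
  have z2sum : ∑' p : ℤ × ℤ, sI 0 p.2 (fun i => (-1 : ℂ) ^ p.1 *
      Fk M τ z1 z2 p.1 p.2 (2 * i + 1)) = 0 := by
    have S2' := (Equiv.prodComm ℤ ℤ).summable_iff.mpr S2
    rw [← (Equiv.prodComm ℤ ℤ).tsum_eq]
    have := S2'.tsum_prod
    simp only [Function.comp, Equiv.prodComm_apply, Prod.snd_swap, Prod.fst_swap] at this ⊢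
    rw [this]
    have hz : ∀ n : ℤ, ∑' J : ℤ, sI 0 n (fun i => (-1 : ℂ) ^ J *
      Fk M τ z1 z2 J n (2 * i + 1)) = 0 := by
      intro n
      rw [sI_tsum _ _ _ fun i => Fk_summable_J hτ M z1 z2 n _]
      simp_rw [Fk_tsum_zero]
      simp [sI]
    simp_rw [hz]
    simp
  constructor
  · have := S1.prod
    exact this.congr fun J => in1 J
  · have e1 := S1.tsum_prod
    simp only [in1] at e1
    rw [← e1]
    have e3 : ∑' p : ℤ × ℤ, sI 0 (M * p.1) (fun i => (-1 : ℂ) ^ p.1 *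
      Fk M τ z1 z2 p.1 p.2 (2 * i + 1)) = _ := (tsum_congr point).trans
        ((S2.tsum_sub (q1.sub q2)).trans (congrArg _ (q1.tsum_sub q2)))
    rw [e3, z2sum, zero_sub, neg_neg]
    exact congrArg₂ (· - ·) (shear1.tsum_eq _).symm (shear2.tsum_eq _).symm

/-! ### Part 4: rewriting of the building blocks -/

lemma exp_e2 (w : ℂ) : Complex.exp (2 * Real.pi * Complex.I * w) = e2 w := rfl

lemma jTheta_e2 (k m τ z : ℂ) : jTheta k m τ z =
    ∑' j : ℤ, e2 (m * ((j : ℂ) + k / (2 * m)) * z + τ * (m * ((j : ℂ) + k / (2 * m)) ^ 2)) := by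
  unfold jTheta
  refine tsum_congr fun j => ?_
  rw [exp_e2, qpow_eq, ← e2_add]

lemma jTheta_neg (k m τ z : ℂ) : jTheta k m τ (-z) = jTheta (-k) m τ z := by
  rw [jTheta_e2, jTheta_e2, ← (Equiv.neg ℤ).tsum_eq]
  refine tsum_congr fun j => ?_
  congr 1
  simp only [Equiv.neg_apply]
  push_cast; ring

lemma jTheta_shift {m : ℂ} (hm : m ≠ 0) (k τ z : ℂ) (r : ℤ) :
    jTheta (2 * m * r + k) m τ z = jTheta k m τ z := by
  rw [jTheta_e2, jTheta_e2, ← (Equiv.addRight r).tsum_eq (fun j : ℤ =>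
    e2 (m * ((j : ℂ) + k / (2 * m)) * z + τ * (m * ((j : ℂ) + k / (2 * m)) ^ 2)))]
  refine tsum_congr fun j => ?_
  have : (j : ℂ) + (2 * m * r + k) / (2 * m) = ((Equiv.addRight r j : ℤ) : ℂ) + k / (2 * m) := by
    simp only [Equiv.coe_addRight]
    push_cast; field_simp; ring
  rw [this]

lemma e2_ne_one {τ z : ℂ} (h : ¬ InLattice (2 * τ) (2 * z)) (i : ℤ) :
    1 - e2 (2 * z + 2 * τ * i) ≠ 0 := by
  intro h0
  have h1 : e2 (2 * z + 2 * τ * i) = 1 := (sub_eq_zero.mp h0).symm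
  unfold e2 at h1
  rw [Complex.exp_eq_one_iff] at h1
  obtain ⟨n, hn⟩ := h1
  apply h
  refine ⟨n, -i, ?_⟩
  have hp : (2 * Real.pi * Complex.I : ℂ) ≠ 0 := Complex.two_pi_I_ne_zero
  have : 2 * z + 2 * τ * i = n := by
    apply mul_left_cancel₀ hp
    rw [hn]; ring
  push_cast
  linear_combination this

lemma InLattice_neg {τ z : ℂ} (h : ¬ InLattice (2 * τ) (2 * z)) :
    ¬ InLattice (2 * τ) (2 * -z) := by
  rintro ⟨a, b, hab⟩
  apply h
  refine ⟨-a, -b, ?_⟩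
  push_cast
  linear_combination -hab

lemma mumford_neg (τ z : ℂ) : mumford 1 1 τ (-z) = - mumford 1 1 τ z := by
  unfold mumford
  rw [← tsum_neg, ← (Equiv.subLeft (-1 : ℤ)).tsum_eq]
  refine tsum_congr fun n => ?_
  simp only [Equiv.subLeft_apply]
  have h : Complex.exp (-((2 * n + 1 : ℤ) : ℂ) * (Real.pi * Complex.I)) = -1 := by
    have := e2_half (-(2 * n + 1))
    unfold e2 at this
    rw [zpow_neg, zpow_add₀ (by norm_num), zpow_mul] at this
    norm_num at this
    rw [← this]; congr 1; push_cast; ring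
  rw [← neg_one_mul (Complex.exp _), ← h, ← Complex.exp_add]
  congr 1
  push_cast; ring

lemma Phi1_e2 (M : ℕ) (k : ℕ) (τ z1 z2 : ℂ) :
    Phi1 (M / 2) (k + 1 / 2) (2 * τ) (2 * z1) (2 * z2) 0 =
    ∑' j : ℤ, e2 (τ * M * (j : ℂ) ^ 2 + (M * (z1 + z2) + (2 * k + 1) * τ) * j + (2 * k + 1) * z1) /
        (1 - e2 (2 * z1 + 2 * τ * j)) := by
  unfold Phi1
  rw [mul_zero, Complex.exp_zero, one_mul]
  refine tsum_congr fun j => ?_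
  rw [exp_e2, qpow_eq, qpow_eq, ← e2_add, ← e2_add]
  congr 2
  ring

lemma Phi2_eq (m s τ z1 z2 : ℂ) :
    Phi2 m s (2 * τ) (2 * z1) (2 * z2) 0 = Phi1 m s (2 * τ) (2 * (-z2)) (2 * (-z1)) 0 := by
  unfold Phi1 Phi2
  congr 1
  refine tsum_congr fun j => ?_
  congr 3
  · ring_nf
  · ring_nf

lemma den_bounded {τ : ℂ} (hτ : 0 < τ.im) (z : ℂ) :
    ∃ C : ℝ, 0 ≤ C ∧ ∀ n : ℤ, ‖(1 - e2 (2 * z + 2 * τ * n))⁻¹‖ ≤ C := by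
  have hq : ‖e2 τ‖ < 1 := by
    rw [norm_e2, Real.exp_lt_one_iff]
    nlinarith [mul_pos Real.pi_pos hτ]
  obtain ⟨C, hC0, hC⟩ := inv_bounded (e2_ne τ) hq (e2_ne (2 * z))
  refine ⟨C, hC0, fun n => ?_⟩
  have := hC n
  rw [e2_zpow, ← e2_add] at this
  convert this using 5
  push_cast; ring

lemma im_mul_nat_pos {τ : ℂ} (hτ : 0 < τ.im) {M : ℕ} (hM : 0 < M) : 0 < (τ * M).im := by
  have hM' : (0 : ℝ) < M := by exact_mod_cast hM
  rw [show (M : ℂ) = ((M : ℝ) : ℂ) by push_cast; rfl, Complex.im_mul_ofReal]; positivity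

lemma Phi1_summable {τ : ℂ} (hτ : 0 < τ.im) {M : ℕ} (hM : 0 < M) (z1 β γ : ℂ) :
    Summable fun j : ℤ => e2 (τ * M * (j : ℂ) ^ 2 + β * j + γ) /
        (1 - e2 (2 * z1 + 2 * τ * j)) := by
  obtain ⟨C, hC0, hC⟩ := den_bounded hτ z1
  refine Summable.of_norm_bounded
    ((gauss_summable0 (im_mul_nat_pos hτ hM) β γ).mul_right C) fun j => ?_
  rw [div_eq_mul_inv, norm_mul]
  exact mul_le_mul_of_nonneg_left (hC j) (norm_nonneg _)

lemma Phi1_step {τ : ℂ} (hτ : 0 < τ.im) {M : ℕ} (hM : 0 < M) (z1 z2 : ℂ)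
    (hz : ∀ i : ℤ, 1 - e2 (2 * z1 + 2 * τ * i) ≠ 0) (k : ℕ) :
    Phi1 (M / 2) ((k + 1 : ℕ) + 1 / 2) (2 * τ) (2 * z1) (2 * z2) 0 =
    Phi1 (M / 2) (k + 1 / 2) (2 * τ) (2 * z1) (2 * z2) 0 -
      e2 ((1 + 2 * k) * (z1 - z2) / 2) * qpow τ (-((1 + 2 * (k : ℂ)) ^ 2) / (4 * M)) *
        jTheta (1 / 2 + k) (M / 2) (2 * τ) (2 * (z1 + z2)) := by
  have hM0 : (M : ℂ) ≠ 0 := by exact_mod_cast hM.ne'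
  rw [Phi1_e2, Phi1_e2, eq_sub_iff_add_eq, ← eq_sub_iff_add_eq',
    ← (Phi1_summable hτ hM z1 _ _).tsum_sub (Phi1_summable hτ hM z1 _ _), jTheta_e2,
    ← tsum_mul_left]
  refine tsum_congr fun j => ?_
  rw [← sub_div, eq_div_iff (hz j), qpow_eq, ← e2_add, ← e2_add, mul_sub, mul_one, ← e2_add]
  congr 1
  · congr 1; field_simp; ring
  · congr 1; push_cast; field_simp; ring

lemma Phi_reduce {τ : ℂ} (hτ : 0 < τ.im) {M : ℕ} (hM : 0 < M) (z1 z2 : ℂ)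
    (hz1 : ∀ i : ℤ, 1 - e2 (2 * z1 + 2 * τ * i) ≠ 0)
    (hz2 : ∀ i : ℤ, 1 - e2 (2 * (-z2) + 2 * τ * i) ≠ 0) (n : ℕ) :
    Phi (M / 2) (n + 1 / 2) (2 * τ) (2 * z1) (2 * z2) 0 =
    Phi1 (M / 2) ((0 : ℕ) + 1 / 2) (2 * τ) (2 * z1) (2 * z2) 0 -
    Phi1 (M / 2) ((0 : ℕ) + 1 / 2) (2 * τ) (2 * (-z2)) (2 * (-z1)) 0 -
      ∑ k ∈ Finset.range n,
      e2 ((1 + 2 * k) * (z1 - z2) / 2) * qpow τ (-((1 + 2 * (k : ℂ)) ^ 2) / (4 * M)) *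
        (jTheta (1 / 2 + k) (M / 2) (2 * τ) (2 * (z1 + z2)) -
        jTheta (-(1 / 2 + k)) (M / 2) (2 * τ) (2 * (z1 + z2))) := by
  unfold Phi
  rw [Phi2_eq]
  induction n with
  | zero => simp
  | succ n ih =>
    rw [Finset.sum_range_succ, Phi1_step hτ hM z1 z2 hz1, Phi1_step hτ hM (-z2) (-z1) hz2,
      ← jTheta_neg, show 2 * (-z2 + -z1) = -(2 * (z1 + z2)) by ring,
      show -z2 - -z1 = z1 - z2 by ring]
    linear_combination ih

lemma Fk_theta {M : ℕ} (hM : 0 < M) (τ z1 z2 : ℂ) (J k : ℤ) :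
    ∑' n : ℤ, Fk M τ z1 z2 J n k =
    e2 (τ * ((J : ℂ) ^ 2 + J * k - (k : ℂ) ^ 2 / (4 * M))) * e2 (k * (z1 - z2) / 2) *
      jTheta k M τ (z1 + z2) := by
  have hM0 : (M : ℂ) ≠ 0 := by exact_mod_cast hM.ne'
  rw [jTheta_e2, ← tsum_mul_left]
  refine tsum_congr fun n => ?_
  rw [← e2_add, ← e2_add]
  unfold Fk
  congr 1
  field_simp; ring

lemma theta_T {M : ℕ} (τ x : ℂ) (ε : ℂ) (hε : ∀ l : ℤ, e2 (l * ε) = (-1) ^ l) :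
    jTheta 0 (M + 1) τ ((ε + x) / (M + 1)) =
    ∑' l : ℤ, (-1 : ℂ) ^ l * e2 (τ * (M + 1) * (l : ℂ) ^ 2 + x * l) := by
  have hM0 : (M : ℂ) + 1 ≠ 0 := by exact_mod_cast M.succ_ne_zero
  rw [jTheta_e2]
  refine tsum_congr fun l => ?_
  rw [← hε, ← e2_add]
  congr 1
  field_simp; ring

/-! ### Part 5: folding and splitting -/

lemma split_one (M : ℕ) (hM : 0 < M) (g : ℤ → ℂ) (h0 : g M = 0) :
    ∑ i ∈ Finset.range M, g (2 * i + 1) =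
      ∑ k ∈ (Finset.Icc 1 (M - 1)).filter (fun k => Odd k), g k +
      ∑ k ∈ (Finset.Icc 1 (M - 1)).filter (fun k => Odd k), g (2 * M - k) := by
  rw [← Finset.sum_filter_add_sum_filter_not (Finset.range M) (fun i => 2 * i + 1 < M)]
  congr 1
  · refine Finset.sum_nbij' (fun i => 2 * i + 1) (fun k => k / 2) ?_ ?_ ?_ ?_ ?_
    · intro i hi
      simp only [Finset.mem_filter, Finset.mem_range, Finset.mem_Icc] at hi ⊢
      exact ⟨by omega, ⟨i, rfl⟩⟩
    · intro k hk
      simp only [Finset.mem_filter, Finset.mem_range, Finset.mem_Icc] at hk ⊢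
      obtain ⟨h, a, rfl⟩ := hk
      omega
    · intro i _
      omega
    · intro k hk
      simp only [Finset.mem_filter, Finset.mem_range, Finset.mem_Icc] at hk ⊢
      obtain ⟨h, a, rfl⟩ := hk
      omega
    · intro i _
      push_cast; rfl
  · rw [← Finset.sum_filter_add_sum_filter_not _ (fun i => 2 * i + 1 = M), Finset.sum_eq_zero,
      zero_add]
    · refine Finset.sum_nbij' (fun i => 2 * M - (2 * i + 1)) (fun k => (2 * M - 1 - k) / 2)
        ?_ ?_ ?_ ?_ ?_
      · intro i hi
        simp only [Finset.mem_filter, Finset.mem_range, Finset.mem_Icc] at hi ⊢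
        exact ⟨by omega, ⟨M - i - 1, by omega⟩⟩
      · intro k hk
        simp only [Finset.mem_filter, Finset.mem_range, Finset.mem_Icc] at hk ⊢
        obtain ⟨h, a, rfl⟩ := hk
        omega
      · intro i hi
        simp only [Finset.mem_filter, Finset.mem_range, Finset.mem_Icc] at hi ⊢
        omega
      · intro k hk
        simp only [Finset.mem_filter, Finset.mem_range, Finset.mem_Icc] at hk ⊢
        obtain ⟨h, a, rfl⟩ := hk
        omega
      · intro i hi
        simp only [Finset.mem_filter, Finset.mem_range, Finset.mem_Icc] at hi ⊢
        congr 1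
        omega
    · intro i hi
      simp only [Finset.mem_filter] at hi
      rw [← h0]
      congr 1
      omega

lemma split_all (M : ℕ) (hM : 0 < M) (f : ℤ → ℂ) (h0 : ∀ r : ℤ, f (2 * M * r + M) = 0) (J : ℕ) :
    ∑ i ∈ Finset.range (M * J), f (2 * i + 1) =
      ∑ r ∈ Finset.range J, ∑ k ∈ (Finset.Icc 1 (M - 1)).filter (fun k => Odd k),
        f (2 * M * r + k) +
      ∑ r ∈ Finset.Icc 1 J, ∑ k ∈ (Finset.Icc 1 (M - 1)).filter (fun k => Odd k),
        f (2 * M * r - k) := by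
  induction J with
  | zero => simp
  | succ J ih =>
    rw [mul_add, mul_one, Finset.sum_range_add, ih, Finset.sum_range_succ,
      Finset.sum_Icc_succ_top (by omega)]
    have h := split_one M hM (fun x => f (2 * M * J + x)) (h0 J)
    have e1 : ∑ i ∈ Finset.range M, f (2 * ((M * J + i : ℕ) : ℤ) + 1) =
        ∑ i ∈ Finset.range M, f (2 * M * J + (2 * i + 1)) := by
      refine Finset.sum_congr rfl fun i _ => ?_
      congr 1; push_cast; ring
    have e2 : ∑ k ∈ (Finset.Icc 1 (M - 1)).filter (fun k => Odd k),
        f (2 * M * ((J + 1 : ℕ) : ℤ) - k) = ∑ k ∈ (Finset.Icc 1 (M - 1)).filter (fun k => Odd k),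
        f (2 * M * J + (2 * M - k)) := by
      refine Finset.sum_congr rfl fun i _ => ?_
      congr 1; push_cast; ring
    rw [e1, h, e2]
    ring

lemma sI_nat (N : ℕ) (f : ℤ → ℂ) : sI 0 N f = ∑ i ∈ Finset.range N, f i := by
  induction N with
  | zero => simp [sI]
  | succ N ih => rw [Finset.sum_range_succ, ← ih, Nat.cast_succ, sI_succ]

lemma sI_neg_nat (N : ℕ) (f : ℤ → ℂ) :
    sI 0 (-N) f = - ∑ i ∈ Finset.range N, f (-1 - i) := by
  induction N with
  | zero => simp [sI]
  | succ N ih =>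
    have := sI_succ 0 (-((N + 1 : ℕ) : ℤ)) f
    rw [show -((N + 1 : ℕ) : ℤ) + 1 = -N by push_cast; ring, ih] at this
    rw [Finset.sum_range_succ, show (-1 - N : ℤ) = -((N + 1 : ℕ) : ℤ) by push_cast; ring]
    linear_combination -this

/-- The symmetric summand. -/
def Hs (M : ℕ) (τ w : ℂ) (J k : ℤ) : ℂ :=
  (-1 : ℂ) ^ J * e2 (τ * ((J : ℂ) ^ 2 + J * k - (k : ℂ) ^ 2 / (4 * M))) *
    (e2 (k * w / 2) + e2 (-(k * w / 2)))

lemma fold_int (f : ℤ → ℂ) (hS : Summable f) (h0 : f 0 = 0) :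
    ∑' J : ℤ, f J = ∑' j : ℕ, (f ((j : ℤ) + 1) + f (-((j : ℤ) + 1))) := by
  have s1 : Summable fun n : ℕ => f ((n : ℤ) + 1) :=
    hS.comp_injective (i := fun n : ℕ => (n : ℤ) + 1) (fun a b h => by simpa using h)
  have s2 : Summable fun n : ℕ => f (-((n : ℤ) + 1)) :=
    hS.comp_injective (i := fun n : ℕ => -((n : ℤ) + 1)) (fun a b h => by simpa using h)
  rw [tsum_of_add_one_of_neg_add_one s1 s2, h0, add_zero, s1.tsum_add s2]

lemma fold (M : ℕ) (τ w : ℂ) (D : ℤ → ℂ) (hD : ∀ k, D (-k) = - D k)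
    (hS : Summable fun J : ℤ => sI 0 (M * J) fun i => (-1 : ℂ) ^ J *
      (e2 (τ * ((J : ℂ) ^ 2 + J * ((2 * i + 1 : ℤ) : ℂ) - (((2 * i + 1 : ℤ) : ℂ)) ^ 2 / (4 * M))) *
      e2 (((2 * i + 1 : ℤ) : ℂ) * w / 2) * D (2 * i + 1))) :
    ∑' J : ℤ, sI 0 (M * J) (fun i => (-1 : ℂ) ^ J *
      (e2 (τ * ((J : ℂ) ^ 2 + J * ((2 * i + 1 : ℤ) : ℂ) - (((2 * i + 1 : ℤ) : ℂ)) ^ 2 / (4 * M))) *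
      e2 (((2 * i + 1 : ℤ) : ℂ) * w / 2) * D (2 * i + 1))) =
    ∑' j : ℕ, ∑ i ∈ Finset.range (M * (j + 1)),
      Hs M τ w (j + 1) (2 * i + 1) * D (2 * i + 1) := by
  rw [fold_int _ hS (by rw [mul_zero, sI_self])]
  refine tsum_congr fun j => ?_
  rw [show (M : ℤ) * ((j : ℤ) + 1) = ((M * (j + 1) : ℕ) : ℤ) by push_cast; ring,
    show (M : ℤ) * (-((j : ℤ) + 1)) = -((M * (j + 1) : ℕ) : ℤ) by push_cast; ring,
    sI_nat, sI_neg_nat, ← Finset.sum_neg_distrib, ← Finset.sum_add_distrib]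
  refine Finset.sum_congr rfl fun i _ => ?_
  rw [show (2 * (-1 - (i : ℤ)) + 1) = -(2 * i + 1) by ring, hD]
  unfold Hs
  have hs : (-1 : ℂ) ^ (-((j : ℤ) + 1)) = (-1) ^ ((j : ℤ) + 1) := by
    rw [zpow_neg, ← inv_zpow]; norm_num
  rw [hs]
  have a1 : e2 (τ * ((((-((j : ℤ) + 1) : ℤ)) : ℂ) ^ 2 + ((-((j : ℤ) + 1) : ℤ) : ℂ) *
      ((-(2 * (i : ℤ) + 1) : ℤ) : ℂ) -
      ((-(2 * (i : ℤ) + 1) : ℤ) : ℂ) ^ 2 / (4 * M))) = e2 (τ * (((((j : ℤ) + 1) : ℤ) : ℂ) ^ 2 +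
      ((((j : ℤ) + 1) : ℤ) : ℂ) * (((2 * (i : ℤ) + 1) : ℤ) : ℂ) -
      (((2 * (i : ℤ) + 1) : ℤ) : ℂ) ^ 2 / (4 * M))) := by
    congr 1; push_cast; ring
  have a2 : e2 (((-(2 * (i : ℤ) + 1) : ℤ) : ℂ) * w / 2) =
      e2 (-((((2 * (i : ℤ) + 1) : ℤ) : ℂ) * w / 2)) := by
    congr 1; push_cast; ring
  rw [a1, a2]
  ring

lemma Hs_norm_le (M : ℕ) (hM : 0 < M) {τ : ℂ} (hτ : 0 < τ.im) (w : ℂ) (J k : ℤ) (h0 : 0 ≤ k)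
    (h1 : k ≤ 2 * M * J) :
    ‖Hs M τ w J k‖ ≤ 2 * ‖e2 (τ * (J : ℂ) ^ 2 + (-(Complex.I * (M * |w.im| : ℝ))) * J + 0)‖ := by
  have hM' : (0 : ℝ) < M := by exact_mod_cast hM
  have h0' : (0 : ℝ) ≤ k := by exact_mod_cast h0
  have h1' : (k : ℝ) ≤ 2 * M * J := by exact_mod_cast h1
  unfold Hs
  rw [norm_mul, norm_mul, norm_neg_one_zpow, one_mul]
  have b1 : ‖e2 (τ * ((J : ℂ) ^ 2 + J * k - (k : ℂ) ^ 2 / (4 * M)))‖ ≤ ‖e2 (τ * (J : ℂ) ^ 2)‖ := by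
    rw [norm_e2, norm_e2, Real.exp_le_exp,
      show (J : ℂ) ^ 2 + J * k - (k : ℂ) ^ 2 / (4 * M) =
        (((J : ℝ) ^ 2 + J * k - (k : ℝ) ^ 2 / (4 * M) : ℝ) : ℂ) by push_cast; rfl,
      show (J : ℂ) ^ 2 = (((J : ℝ) ^ 2 : ℝ) : ℂ) by push_cast; rfl,
      Complex.im_mul_ofReal, Complex.im_mul_ofReal]
    have : (k : ℝ) ^ 2 / (4 * M) ≤ J * k := by
      rw [div_le_iff₀ (by positivity)]
      nlinarith
    have h2 : τ.im * (J : ℝ) ^ 2 ≤ τ.im * ((J : ℝ) ^ 2 + J * k - (k : ℝ) ^ 2 / (4 * M)) := by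
      apply mul_le_mul_of_nonneg_left _ hτ.le
      linarith
    nlinarith [Real.pi_pos]
  have him : ((k : ℂ) * w / 2).im = k * w.im / 2 := by
    rw [show (k : ℂ) * w / 2 = ((k / 2 : ℝ) : ℂ) * w by push_cast; ring, Complex.im_ofReal_mul]
    ring
  have hk : (k : ℝ) * |w.im| / 2 ≤ M * |w.im| * J := by
    nlinarith [abs_nonneg w.im]
  have hI : (-(Complex.I * (M * |w.im| : ℝ)) * (J : ℂ)).im = -(M * |w.im| * J) := by
    rw [show -(Complex.I * (M * |w.im| : ℝ)) * (J : ℂ) =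
      ((-(M * |w.im| * J) : ℝ) : ℂ) * Complex.I by push_cast; ring, Complex.im_ofReal_mul]
    simp
  have b2 : ‖e2 (k * w / 2)‖ ≤ ‖e2 (-(Complex.I * (M * |w.im| : ℝ)) * (J : ℂ))‖ := by
    rw [norm_e2, norm_e2, Real.exp_le_exp, him, hI]
    have : -((k : ℝ) * w.im / 2) ≤ k * |w.im| / 2 := by
      nlinarith [neg_abs_le w.im]
    nlinarith [Real.pi_pos]
  have b3 : ‖e2 (-(k * w / 2))‖ ≤ ‖e2 (-(Complex.I * (M * |w.im| : ℝ)) * (J : ℂ))‖ := by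
    rw [norm_e2, norm_e2, Real.exp_le_exp, Complex.neg_im, him, hI]
    have : ((k : ℝ) * w.im / 2) ≤ k * |w.im| / 2 := by
      nlinarith [le_abs_self w.im]
    nlinarith [Real.pi_pos]
  rw [add_zero, e2_add, norm_mul]
  calc _ ≤ ‖e2 (τ * (J : ℂ) ^ 2)‖ * (‖e2 (-(Complex.I * (M * |w.im| : ℝ)) * (J : ℂ))‖ +
      ‖e2 (-(Complex.I * (M * |w.im| : ℝ)) * (J : ℂ))‖) :=
        mul_le_mul b1 ((norm_add_le _ _).trans (add_le_add b2 b3)) (norm_nonneg _) (norm_nonneg _)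
    _ = _ := by ring

lemma dbl_summable (M : ℕ) (hM : 0 < M) {τ : ℂ} (hτ : 0 < τ.im) (w : ℂ) (S : ℕ → Finset ℕ)
    (hS : ∀ j, (S j).card ≤ j + 1) (K : Finset ℕ) (κ : ℕ → ℕ → ℤ)
    (h : ∀ j, ∀ r ∈ S j, ∀ k ∈ K, 0 ≤ κ r k ∧ κ r k ≤ 2 * M * (j + 1)) (d : ℕ → ℂ) :
    Summable fun j : ℕ => ∑ r ∈ S j, ∑ k ∈ K, Hs M τ w (j + 1) (κ r k) * d k := by
  have g := (gauss_summable hτ (-(Complex.I * (M * |w.im| : ℝ))) 0 1).comp_injective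
    (i := fun n : ℕ => (n : ℤ) + 1) (fun a b h => by simpa using h)
  refine Summable.of_norm_bounded (g.mul_right (2 * ∑ k ∈ K, ‖d k‖)) fun j => ?_
  simp only [Function.comp, pow_one]
  set X := ‖e2 (τ * (((j : ℤ) + 1 : ℤ) : ℂ) ^ 2 +
    (-(Complex.I * (M * |w.im| : ℝ))) * (((j : ℤ) + 1 : ℤ) : ℂ) + 0)‖ with hX
  have hj : |((((j : ℤ) + 1 : ℤ)) : ℝ)| = (j : ℝ) + 1 := by
    push_cast
    exact abs_of_nonneg (by positivity)
  rw [hj]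
  have hX0 : 0 ≤ X := norm_nonneg _
  have hd0 : 0 ≤ ∑ k ∈ K, ‖d k‖ := Finset.sum_nonneg fun _ _ => norm_nonneg _
  calc _ ≤ ∑ r ∈ S j, ∑ k ∈ K, 2 * X * ‖d k‖ := by
        refine (norm_sum_le _ _).trans (Finset.sum_le_sum fun r hr => ?_)
        refine (norm_sum_le _ _).trans (Finset.sum_le_sum fun k hk => ?_)
        rw [norm_mul]
        refine mul_le_mul_of_nonneg_right ?_ (norm_nonneg _)
        exact Hs_norm_le M hM hτ w _ _ (h j r hr k hk).1 (by exact_mod_cast (h j r hr k hk).2)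
    _ = (S j).card * (2 * X * ∑ k ∈ K, ‖d k‖) := by
        rw [Finset.sum_const, nsmul_eq_mul, ← Finset.mul_sum]
    _ ≤ ((j : ℝ) + 1) * (2 * X * ∑ k ∈ K, ‖d k‖) := by
        refine mul_le_mul_of_nonneg_right ?_ (by positivity)
        exact_mod_cast hS j
    _ = _ := by ring

/-! ### Part 6: assembly -/

/-- The antisymmetric theta combination. -/
def Dt (M : ℕ) (τ z : ℂ) (k : ℤ) : ℂ := jTheta k M τ z - jTheta (-(k : ℂ)) M τ z

lemma Dt_neg (M : ℕ) (τ z : ℂ) (k : ℤ) : Dt M τ z (-k) = - Dt M τ z k := by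
  unfold Dt; push_cast; rw [neg_neg]; ring

lemma Dt_shift {M : ℕ} (hM : 0 < M) (τ z : ℂ) (r k : ℤ) :
    Dt M τ z (2 * M * r + k) = Dt M τ z k := by
  have hM0 : (M : ℂ) ≠ 0 := by exact_mod_cast hM.ne'
  unfold Dt
  have a1 := jTheta_shift hM0 k τ z r
  have a2 := jTheta_shift hM0 (-k) τ z (-r)
  rw [← a1, ← a2]
  congr 2 <;> (push_cast; ring)

lemma Dt_shift_neg {M : ℕ} (hM : 0 < M) (τ z : ℂ) (r k : ℤ) :
    Dt M τ z (2 * M * r - k) = - Dt M τ z k := by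
  rw [sub_eq_add_neg, Dt_shift hM, Dt_neg]

lemma Dt_mid {M : ℕ} (hM : 0 < M) (τ z : ℂ) (r : ℤ) :
    Dt M τ z (2 * M * r + M) = 0 := by
  have h1 := Dt_shift hM τ z r M
  have h2 := Dt_shift_neg hM τ z (r + 1) M
  rw [show (2 * (M : ℤ) * (r + 1) - M) = 2 * M * r + M by ring] at h2
  rw [h1] at h2 ⊢
  linear_combination h2 / 2

lemma half_case {τ : ℂ} (hτ : 0 < τ.im) {M : ℕ} (hM : 0 < M) (z1 z2 : ℂ)
    (h1 : ¬ InLattice (2 * τ) (2 * z1)) (h2 : ¬ InLattice (2 * τ) (2 * z2)) :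
    jTheta 0 (M + 1) τ ((-(1 / 2) + M * (z1 - z2)) / (M + 1)) *
      (Phi1 (M / 2) ((0 : ℕ) + 1 / 2) (2 * τ) (2 * z1) (2 * z2) 0 -
       Phi1 (M / 2) ((0 : ℕ) + 1 / 2) (2 * τ) (2 * (-z2)) (2 * (-z1)) 0) =
    -Complex.I * eta (2 * τ) ^ 3 *
          (jTheta 0 (M + 1) τ ((1 / 2 + z1 - z2) / (M + 1) + z1 + z2) /
              mumford 1 1 (2 * τ) (2 * z1) +
            jTheta 0 (M + 1) τ ((1 / 2 + z1 - z2) / (M + 1) - z1 - z2) /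
              mumford 1 1 (2 * τ) (2 * z2)) -
    ∑' j : ℕ, ∑ i ∈ Finset.range (M * (j + 1)),
      Hs M τ (z1 - z2) (j + 1) (2 * i + 1) * Dt M τ (z1 + z2) (2 * i + 1) := by
  have hM1 : (M : ℂ) + 1 ≠ 0 := by exact_mod_cast M.succ_ne_zero
  have hz1 := e2_ne_one h1
  have hz2 := e2_ne_one (InLattice_neg h2)
  obtain ⟨s1, c1⟩ := core hτ hM z1 z2 hz1
  obtain ⟨s2, c2⟩ := core hτ hM (-z2) (-z1) hz2
  rw [← eta_div_mumford hτ _ hz1] at c1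
  rw [← eta_div_mumford hτ _ hz2, show mumford 1 1 (2 * τ) (2 * -z2) = -mumford 1 1 (2 * τ) (2 * z2) by
    rw [mul_neg, mumford_neg]] at c2
  have ep : ∀ l : ℤ, e2 (l * (1 / 2)) = (-1) ^ l := fun l => by
    rw [← e2_half]; congr 1; ring
  have em : ∀ l : ℤ, e2 (l * (-(1 / 2))) = (-1) ^ l := fun l => by
    rw [show (l : ℂ) * (-(1 / 2)) = ((-l : ℤ) : ℂ) / 2 by push_cast; ring, e2_half, zpow_neg,
      ← inv_zpow]
    norm_num
  rw [← theta_T τ (M * (z1 - z2)) _ em,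
    ← theta_T τ (z1 - z2 + (M + 1) * (z1 + z2)) _ ep] at c1
  rw [← theta_T τ (M * (-z2 - -z1)) _ em,
    ← theta_T τ (-z2 - -z1 + (M + 1) * (-z2 + -z1)) _ ep] at c2
  have p1 := Phi1_e2 M 0 τ z1 z2
  have p2 := Phi1_e2 M 0 τ (-z2) (-z1)
  simp only [Nat.cast_zero, mul_zero, zero_add, one_mul] at p1 p2
  simp only [Nat.cast_zero, zero_add]
  rw [← p1] at c1
  rw [← p2] at c2
  rw [show (1 / 2 + (z1 - z2 + ((M : ℂ) + 1) * (z1 + z2))) / (M + 1) =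
    (1 / 2 + z1 - z2) / (M + 1) + z1 + z2 by field_simp; ring] at c1
  rw [show (1 / 2 + (-z2 - -z1 + ((M : ℂ) + 1) * (-z2 + -z1))) / (M + 1) =
    (1 / 2 + z1 - z2) / (M + 1) - z1 - z2 by field_simp; ring,
    show -z2 - -z1 = z1 - z2 by ring] at c2
  simp only [Fk_theta hM] at s1 c1 s2 c2
  have key : ∀ J : ℤ, (sI 0 (M * J) fun i => (-1 : ℂ) ^ J *
      (e2 (τ * ((J : ℂ) ^ 2 + J * ((2 * i + 1 : ℤ) : ℂ) - (((2 * i + 1 : ℤ) : ℂ)) ^ 2 / (4 * M))) *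
      e2 (((2 * i + 1 : ℤ) : ℂ) * (z1 - z2) / 2) * jTheta ((2 * i + 1 : ℤ) : ℂ) M τ (z1 + z2))) -
      (sI 0 (M * J) fun i => (-1 : ℂ) ^ J *
      (e2 (τ * ((J : ℂ) ^ 2 + J * ((2 * i + 1 : ℤ) : ℂ) - (((2 * i + 1 : ℤ) : ℂ)) ^ 2 / (4 * M))) *
      e2 (((2 * i + 1 : ℤ) : ℂ) * (-z2 - -z1) / 2) *
        jTheta ((2 * i + 1 : ℤ) : ℂ) M τ (-z2 + -z1))) =
      sI 0 (M * J) fun i => (-1 : ℂ) ^ J *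
      (e2 (τ * ((J : ℂ) ^ 2 + J * ((2 * i + 1 : ℤ) : ℂ) - (((2 * i + 1 : ℤ) : ℂ)) ^ 2 / (4 * M))) *
      e2 (((2 * i + 1 : ℤ) : ℂ) * (z1 - z2) / 2) * Dt M τ (z1 + z2) (2 * i + 1)) := by
    intro J
    rw [show -z2 - -z1 = z1 - z2 by ring, show -z2 + -z1 = -(z1 + z2) by ring]
    simp only [jTheta_neg]
    unfold sI Dt
    simp only [mul_sub, Finset.sum_sub_distrib]
    ring
  have hS := (s1.sub s2).congr key
  have hT := s1.tsum_sub s2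
  rw [tsum_congr key, fold M τ (z1 - z2) (Dt M τ (z1 + z2)) (Dt_neg M τ (z1 + z2)) hS] at hT
  rw [hT]
  rw [div_neg] at c2
  linear_combination c1 - c2

end Helpers

theorem statement14 (m : ℝ) (M : ℕ) (hM : 0 < M) (hm : m = M / 2)
    (n : ℕ) (s : ℝ) (hs : s = n + 1 / 2)
    (τ : ℂ) (hτ : 0 < τ.im) (z1 z2 : ℂ)
    (h1 : ¬ InLattice (2 * τ) (2 * z1)) (h2 : ¬ InLattice (2 * τ) (2 * z2)) :
    jTheta 0 (2 * (m : ℂ) + 1) τ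
          ((-(1 / 2) + 2 * (m : ℂ) * (z1 - z2)) / (2 * (m : ℂ) + 1)) *
        Phi (m : ℂ) (s : ℂ) (2 * τ) (2 * z1) (2 * z2) 0 =
      -Complex.I * eta (2 * τ) ^ 3 *
          (jTheta 0 (2 * (m : ℂ) + 1) τ
              ((1 / 2 + z1 - z2) / (2 * (m : ℂ) + 1) + z1 + z2) /
              mumford 1 1 (2 * τ) (2 * z1) +
            jTheta 0 (2 * (m : ℂ) + 1) τ
              ((1 / 2 + z1 - z2) / (2 * (m : ℂ) + 1) - z1 - z2) /
              mumford 1 1 (2 * τ) (2 * z2)) +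
        (∑' j : ℕ, ∑ r ∈ Finset.Icc 1 (j + 1),
          ∑ k ∈ (Finset.Icc 1 (M - 1)).filter (fun k => Odd k),
            (-1 : ℂ) ^ (j + 1) *
              qpow τ ((2 * (m : ℂ) + 1) * ((j : ℂ) + 1) ^ 2 -
                (4 * (m : ℂ) * ((j : ℂ) + 1 - (r : ℂ)) + (k : ℂ)) ^ 2 / (8 * (m : ℂ))) *
              (Complex.exp (Real.pi * Complex.I *
                  (4 * (m : ℂ) * (r : ℂ) - (k : ℂ)) * (z1 - z2)) +
                Complex.exp (-(Real.pi * Complex.I) *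
                  (4 * (m : ℂ) * (r : ℂ) - (k : ℂ)) * (z1 - z2))) *
              (jTheta (k : ℂ) (2 * (m : ℂ)) τ (z1 + z2) -
                jTheta (-(k : ℂ)) (2 * (m : ℂ)) τ (z1 + z2))) -
        (∑' j : ℕ, ∑ r ∈ Finset.range (j + 1),
          ∑ k ∈ (Finset.Icc 1 (M - 1)).filter (fun k => Odd k),
            (-1 : ℂ) ^ (j + 1) *
              qpow τ ((2 * (m : ℂ) + 1) * ((j : ℂ) + 1) ^ 2 -
                (4 * (m : ℂ) * ((j : ℂ) + 1 - (r : ℂ)) - (k : ℂ)) ^ 2 / (8 * (m : ℂ))) *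
              (Complex.exp (Real.pi * Complex.I *
                  (4 * (m : ℂ) * (r : ℂ) + (k : ℂ)) * (z1 - z2)) +
                Complex.exp (-(Real.pi * Complex.I) *
                  (4 * (m : ℂ) * (r : ℂ) + (k : ℂ)) * (z1 - z2))) *
              (jTheta (k : ℂ) (2 * (m : ℂ)) τ (z1 + z2) -
                jTheta (-(k : ℂ)) (2 * (m : ℂ)) τ (z1 + z2))) -
        jTheta 0 (2 * (m : ℂ) + 1) τ
            ((-(1 / 2) + 2 * (m : ℂ) * (z1 - z2)) / (2 * (m : ℂ) + 1)) *
          ∑ k ∈ Finset.range n,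
            Complex.exp (Real.pi * Complex.I * (1 + 2 * (k : ℂ)) * (z1 - z2)) *
              qpow τ (-((1 + 2 * (k : ℂ)) ^ 2) / (8 * (m : ℂ))) *
              (jTheta (1 / 2 + (k : ℂ)) (m : ℂ) (2 * τ) (2 * (z1 + z2)) -
                jTheta (-(1 / 2 + (k : ℂ))) (m : ℂ) (2 * τ) (2 * (z1 + z2))) := by
  subst hm hs
  have hM0 : (M : ℂ) ≠ 0 := by exact_mod_cast hM.ne'
  have hmc : (((M : ℝ) / 2 : ℝ) : ℂ) = (M : ℂ) / 2 := by push_cast; rfl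
  have hsc : (((n : ℝ) + 1 / 2 : ℝ) : ℂ) = (n : ℂ) + 1 / 2 := by push_cast; rfl
  have h2m : 2 * ((M : ℂ) / 2) = M := by ring
  rw [hmc, hsc, h2m, Phi_reduce hτ hM z1 z2 (e2_ne_one h1) (e2_ne_one (InLattice_neg h2)) n,
    mul_sub, half_case hτ hM z1 z2 h1 h2]
  have eL : ∑ k ∈ Finset.range n,
            Complex.exp (Real.pi * Complex.I * (1 + 2 * (k : ℂ)) * (z1 - z2)) *
              qpow τ (-((1 + 2 * (k : ℂ)) ^ 2) / (8 * ((M : ℂ) / 2))) *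
              (jTheta (1 / 2 + (k : ℂ)) ((M : ℂ) / 2) (2 * τ) (2 * (z1 + z2)) -
                jTheta (-(1 / 2 + (k : ℂ))) ((M : ℂ) / 2) (2 * τ) (2 * (z1 + z2))) =
      ∑ k ∈ Finset.range n,
      e2 ((1 + 2 * k) * (z1 - z2) / 2) * qpow τ (-((1 + 2 * (k : ℂ)) ^ 2) / (4 * M)) *
        (jTheta (1 / 2 + k) (M / 2) (2 * τ) (2 * (z1 + z2)) -
        jTheta (-(1 / 2 + k)) (M / 2) (2 * τ) (2 * (z1 + z2))) := by
    refine Finset.sum_congr rfl fun k _ => ?_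
    congr 2
    · rw [← exp_e2]; congr 1; ring
    · congr 1; ring
  rw [eL]
  congr 1
  have hterm : ∀ (j : ℕ) (κ : ℤ) (x y a b : ℂ),
      y = ((j : ℂ) + 1) ^ 2 + ((j : ℂ) + 1) * κ - (κ : ℂ) ^ 2 / (4 * M) → a = κ → b = κ →
      (-1 : ℂ) ^ (j + 1) * qpow τ y * (Complex.exp (Real.pi * Complex.I * a * (z1 - z2)) +
        Complex.exp (-(Real.pi * Complex.I) * b * (z1 - z2))) * x =
      Hs M τ (z1 - z2) (j + 1) κ * x := by
    intro j κ x y a b hy ha hb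
    unfold Hs
    rw [hy, ha, hb, qpow_eq, ← exp_e2 ((κ : ℂ) * (z1 - z2) / 2),
      ← exp_e2 (-((κ : ℂ) * (z1 - z2) / 2))]
    congr 2
    · congr 1
      push_cast; rfl
    · congr 2 <;> ring
  set K := (Finset.Icc 1 (M - 1)).filter (fun k => Odd k) with hK
  have hKm : ∀ k ∈ K, k ≤ M := by
    intro k hk
    simp only [hK, Finset.mem_filter, Finset.mem_Icc] at hk
    omega
  have eA : ∀ j : ℕ, ∑ r ∈ Finset.Icc 1 (j + 1), ∑ k ∈ K,
            (-1 : ℂ) ^ (j + 1) *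
              qpow τ (((M : ℂ) + 1) * ((j : ℂ) + 1) ^ 2 -
                (4 * ((M : ℂ) / 2) * ((j : ℂ) + 1 - (r : ℂ)) + (k : ℂ)) ^ 2 /
                  (8 * ((M : ℂ) / 2))) *
              (Complex.exp (Real.pi * Complex.I *
                  (4 * ((M : ℂ) / 2) * (r : ℂ) - (k : ℂ)) * (z1 - z2)) +
                Complex.exp (-(Real.pi * Complex.I) *
                  (4 * ((M : ℂ) / 2) * (r : ℂ) - (k : ℂ)) * (z1 - z2))) *
              (jTheta (k : ℂ) M τ (z1 + z2) - jTheta (-(k : ℂ)) M τ (z1 + z2)) =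
      ∑ r ∈ Finset.Icc 1 (j + 1), ∑ k ∈ K,
        Hs M τ (z1 - z2) (j + 1) (2 * M * r - k) * Dt M τ (z1 + z2) k := by
    intro j
    refine Finset.sum_congr rfl fun r _ => Finset.sum_congr rfl fun k _ => ?_
    rw [show Dt M τ (z1 + z2) (k : ℤ) = jTheta (k : ℂ) M τ (z1 + z2) -
      jTheta (-(k : ℂ)) M τ (z1 + z2) by unfold Dt; push_cast; rfl]
    apply hterm
    · push_cast; field_simp; ring
    · push_cast; ring
    · push_cast; ring
  have eB : ∀ j : ℕ, ∑ r ∈ Finset.range (j + 1), ∑ k ∈ K,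
            (-1 : ℂ) ^ (j + 1) *
              qpow τ (((M : ℂ) + 1) * ((j : ℂ) + 1) ^ 2 -
                (4 * ((M : ℂ) / 2) * ((j : ℂ) + 1 - (r : ℂ)) - (k : ℂ)) ^ 2 /
                  (8 * ((M : ℂ) / 2))) *
              (Complex.exp (Real.pi * Complex.I *
                  (4 * ((M : ℂ) / 2) * (r : ℂ) + (k : ℂ)) * (z1 - z2)) +
                Complex.exp (-(Real.pi * Complex.I) *
                  (4 * ((M : ℂ) / 2) * (r : ℂ) + (k : ℂ)) * (z1 - z2))) *
              (jTheta (k : ℂ) M τ (z1 + z2) - jTheta (-(k : ℂ)) M τ (z1 + z2)) =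
      ∑ r ∈ Finset.range (j + 1), ∑ k ∈ K,
        Hs M τ (z1 - z2) (j + 1) (2 * M * r + k) * Dt M τ (z1 + z2) k := by
    intro j
    refine Finset.sum_congr rfl fun r _ => Finset.sum_congr rfl fun k _ => ?_
    rw [show Dt M τ (z1 + z2) (k : ℤ) = jTheta (k : ℂ) M τ (z1 + z2) -
      jTheta (-(k : ℂ)) M τ (z1 + z2) by unfold Dt; push_cast; rfl]
    apply hterm
    · push_cast; field_simp; ring
    · push_cast; ring
    · push_cast; ring
  simp only [eA, eB]
  have sA : Summable fun j : ℕ => ∑ r ∈ Finset.Icc 1 (j + 1), ∑ k ∈ K,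
      Hs M τ (z1 - z2) (j + 1) (2 * M * r - k) * Dt M τ (z1 + z2) k := by
    refine dbl_summable M hM hτ (z1 - z2) (fun j => Finset.Icc 1 (j + 1)) (by simp) K
      (fun r k => 2 * M * r - k) ?_ (fun k => Dt M τ (z1 + z2) k)
    intro j r hr k hk
    have hk' : (k : ℤ) ≤ M := by exact_mod_cast hKm k hk
    rw [Finset.mem_Icc] at hr
    have hr1 : (1 : ℤ) ≤ r := by exact_mod_cast hr.1
    have hr2 : (r : ℤ) ≤ j + 1 := by exact_mod_cast hr.2
    constructor <;> nlinarith
  have sB : Summable fun j : ℕ => ∑ r ∈ Finset.range (j + 1), ∑ k ∈ K,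
      Hs M τ (z1 - z2) (j + 1) (2 * M * r + k) * Dt M τ (z1 + z2) k := by
    refine dbl_summable M hM hτ (z1 - z2) (fun j => Finset.range (j + 1)) (by simp) K
      (fun r k => 2 * M * r + k) ?_ (fun k => Dt M τ (z1 + z2) k)
    intro j r hr k hk
    have hk' : (k : ℤ) ≤ M := by exact_mod_cast hKm k hk
    rw [Finset.mem_range] at hr
    have hr2 : (r : ℤ) ≤ j := by exact_mod_cast Nat.lt_succ_iff.mp hr
    constructor
    · positivity
    · nlinarith
  have hfin : ∑' j : ℕ, ∑ i ∈ Finset.range (M * (j + 1)),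
      Hs M τ (z1 - z2) (j + 1) (2 * i + 1) * Dt M τ (z1 + z2) (2 * i + 1) =
      ∑' j : ℕ, ∑ r ∈ Finset.range (j + 1), ∑ k ∈ K,
        Hs M τ (z1 - z2) (j + 1) (2 * M * r + k) * Dt M τ (z1 + z2) k -
      ∑' j : ℕ, ∑ r ∈ Finset.Icc 1 (j + 1), ∑ k ∈ K,
        Hs M τ (z1 - z2) (j + 1) (2 * M * r - k) * Dt M τ (z1 + z2) k := by
    rw [← sB.tsum_sub sA]
    refine tsum_congr fun j => ?_
    have hsp := split_all M hM (fun k => Hs M τ (z1 - z2) (j + 1) k * Dt M τ (z1 + z2) k)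
      (fun r => by rw [Dt_mid hM, mul_zero]) (j + 1)
    simp only [Dt_shift hM, Dt_shift_neg hM] at hsp
    rw [hsp, ← hK]
    simp only [mul_neg, Finset.sum_neg_distrib]
    ring
  rw [hfin]
  ring

end Wakimoto
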